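/- Let d ≥ 5 and let 𝒰 be the uniform spanning forest of Z^d. There exists a constant C₁, depending only on d, such that for all integers k ≥ 0 and n ≥ 1, E( |B_𝒰(0,n)|^k ) ≤ C₁^k · k! · n^{2k}, where B_𝒰(0,n) is the ball of radius n around 0 in the intrinsic (graph) metric of 𝒰. -/

import Mathlib

open MeasureTheory
open scoped ENNReal Classical

namespace USFPaper

/-- Vertices of the nearest-neighbour integer lattice `ℤ^d`. -/
abbrev V (d : ℕ) := Fin d → ℤ

variable {d : ℕ}

/-- Nearest-neighbour adjacency in `ℤ^d`. -/
def adj (x y : V d) : Prop := (∑ i, |x i - y i|) = 1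

/-- The cube `Q(x,r) = { y : ‖x - y‖_∞ ≤ r }`. -/
def cube (x : V d) (r : ℕ) : Set (V d) := { y | ∀ i, |y i - x i| ≤ (r : ℤ) }

/-- Euclidean distance on `ℤ^d`. -/
noncomputable def eudist (x y : V d) : ℝ := Real.sqrt (∑ i, ((x i : ℝ) - (y i : ℝ)) ^ 2)

/-- Configurations: subgraphs of `ℤ^d`, encoded by the indicator of their edge set
(on unordered pairs of vertices). -/
abbrev Config (d : ℕ) := Sym2 (V d) → Bool

/-- `e` is an edge of the lattice `ℤ^d`. -/
def isLatticeEdge (e : Sym2 (V d)) : Prop := ∃ a b : V d, e = s(a, b) ∧ adj a b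

/-- Spanning trees of the wired graph `G_A^W` obtained from `ℤ^d` by collapsing the
complement of the finite set `A` to a single vertex: sets `T` of lattice edges, each
with at least one endpoint in `A`, with exactly `|A|` edges, and such that every
vertex of `A` is joined by a path of edges of `T` to the (collapsed) complement
of `A`. -/
def wiredSpanningTrees (A : Set (V d)) : Set (Set (Sym2 (V d))) :=
  { T | (∀ e ∈ T, isLatticeEdge e ∧ ∃ v ∈ e, v ∈ A) ∧
        T.ncard = A.ncard ∧
        ∀ x ∈ A, ∃ l : List (V d),
          l.Chain' (fun u w => adj u w ∧ s(u, w) ∈ T) ∧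
          l.head? = some x ∧ ∃ y, l.getLast? = some y ∧ y ∉ A }

/-- The cylinder event prescribing the configuration on the finite edge set `K`. -/
def cylEvent (K : Finset (Sym2 (V d))) (f : Sym2 (V d) → Bool) : Set (Config d) :=
  { ω | ∀ e ∈ K, ω e = f e }

/-- `μ` is the weak limit of the uniform spanning trees of the wired graphs of the
exhausting sequence `Dseq`: for every cylinder event, the proportion of wired spanning
trees of `Dseq r` compatible with it converges to its `μ`-probability. -/
def IsWiredLimit (Dseq : ℕ → Set (V d)) (μ : Measure (Config d)) : Prop :=
  ∀ (K : Finset (Sym2 (V d))) (f : Sym2 (V d) → Bool),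
    Filter.Tendsto
      (fun r : ℕ =>
        ((Set.ncard { T ∈ wiredSpanningTrees (Dseq r) |
            ∀ e ∈ K, (e ∈ T ↔ f e = true) } : ℝ) /
         (Set.ncard (wiredSpanningTrees (Dseq r)) : ℝ)))
      Filter.atTop
      (nhds ((μ (cylEvent K f)).toReal))

/-- `μ` is the uniform spanning forest of `ℤ^d`: the weak limit of the uniform
spanning trees of the (wired) boxes `Q_r`. -/
def IsUSF (μ : Measure (Config d)) : Prop :=
  IsWiredLimit (fun r => cube (0 : V d) r) μ

/-- The ball `B_𝒰(0,n)` of radius `n` about the origin in the intrinsic (graph)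
metric of the configuration `ω`. -/
def ballU (ω : Config d) (n : ℕ) : Set (V d) :=
  { y | ∃ l : List (V d),
      l.Chain' (fun u w => adj u w ∧ ω s(u, w) = true) ∧
      l.head? = some 0 ∧ l.getLast? = some y ∧ l.length ≤ n + 1 }

/-- The component `𝒰₀` of the origin in the configuration `ω`, for a domain `D`:
all vertices joined to `0` by a path of open edges not leaving `D` (i.e. not passing
through the collapsed vertex `r_D`). -/
def comp0In (D : Set (V d)) (ω : Config d) : Set (V d) :=
  { y | ∃ l : List (V d),
      l.Chain' (fun u w => adj u w ∧ ω s(u, w) = true) ∧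
      l.head? = some 0 ∧ l.getLast? = some y ∧ ∀ v ∈ l, v ∈ D }

section

/-! ### averages -/
noncomputable def av {S : Type} [Fintype S] (φ : S → ℝ) : ℝ := (∑ s, φ s) / Fintype.card S

section av
variable {S : Type} [Fintype S]
lemma av_mono {φ ψ : S → ℝ} (h : ∀ s, φ s ≤ ψ s) : av φ ≤ av ψ := by
  unfold av
  exact div_le_div_of_nonneg_right (Finset.sum_le_sum fun s _ => h s) (by positivity)
lemma av_add (φ ψ : S → ℝ) : av (fun s => φ s + ψ s) = av φ + av ψ := by
  unfold av; rw [Finset.sum_add_distrib, add_div]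
lemma av_mul (c : ℝ) (φ : S → ℝ) : av (fun s => c * φ s) = c * av φ := by
  unfold av; rw [← Finset.mul_sum, mul_div_assoc]
lemma av_const [Nonempty S] (c : ℝ) : av (fun _ : S => c) = c := by
  unfold av
  have : (Fintype.card S : ℝ) ≠ 0 := by exact_mod_cast Fintype.card_ne_zero
  simp [this]
lemma av_sum {ι : Type} (I : Finset ι) (φ : ι → S → ℝ) :
    av (fun s => ∑ i ∈ I, φ i s) = ∑ i ∈ I, av (φ i) := by
  unfold av; rw [Finset.sum_comm, Finset.sum_div]

noncomputable def Ew : ℕ → (List S → ℝ) → ℝ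
  | 0, φ => φ []
  | t+1, φ => av fun s => Ew t fun l => φ (s :: l)

lemma Ew_mono (t : ℕ) {φ ψ : List S → ℝ} (h : ∀ l, l.length = t → φ l ≤ ψ l) :
    Ew t φ ≤ Ew t ψ := by
  induction t generalizing φ ψ with
  | zero => exact h [] rfl
  | succ t ih => exact av_mono fun s => ih fun l hl => h _ (by simp [hl])
lemma Ew_congr (t : ℕ) {φ ψ : List S → ℝ} (h : ∀ l, l.length = t → φ l = ψ l) :
    Ew t φ = Ew t ψ :=
  le_antisymm (Ew_mono t fun l hl => (h l hl).le) (Ew_mono t fun l hl => (h l hl).ge)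
lemma Ew_add (t : ℕ) (φ ψ : List S → ℝ) : Ew t (fun l => φ l + ψ l) = Ew t φ + Ew t ψ := by
  induction t generalizing φ ψ with
  | zero => rfl
  | succ t ih => simp only [Ew, ih, av_add]
lemma Ew_mul (t : ℕ) (c : ℝ) (φ : List S → ℝ) : Ew t (fun l => c * φ l) = c * Ew t φ := by
  induction t generalizing φ with
  | zero => rfl
  | succ t ih => simp only [Ew, ih, av_mul]
lemma Ew_const [Nonempty S] (t : ℕ) (c : ℝ) : Ew t (fun _ : List S => c) = c := by
  induction t with
  | zero => rfl
  | succ t ih => simp only [Ew, ih, av_const]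
lemma Ew_sum {ι : Type} (t : ℕ) (I : Finset ι) (φ : ι → List S → ℝ) :
    Ew t (fun l => ∑ i ∈ I, φ i l) = ∑ i ∈ I, Ew t (φ i) := by
  induction t generalizing φ with
  | zero => rfl
  | succ t ih => simp only [Ew, ih, av_sum]
lemma Ew_append (a b : ℕ) (φ : List S → ℝ) :
    Ew (a + b) φ = Ew a fun l => Ew b fun l' => φ (l ++ l') := by
  induction a generalizing φ with
  | zero => simp [Ew]
  | succ a ih =>
    rw [show a + 1 + b = (a + b) + 1 by ring]
    simp only [Ew, ih, List.cons_append]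
lemma Ew_sq [Nonempty S] (t : ℕ) (φ : List S → ℝ) : (Ew t φ)^2 ≤ Ew t (fun l => φ l ^ 2) := by
  have h : Ew t (fun l => 2 * Ew t φ * φ l + -(Ew t φ)^2) ≤ Ew t (fun l => φ l ^ 2) :=
    Ew_mono t fun l _ => by nlinarith [sq_nonneg (φ l - Ew t φ)]
  rw [Ew_add, Ew_mul, Ew_const] at h
  nlinarith
lemma Ew_nonneg [Nonempty S] (t : ℕ) {φ : List S → ℝ} (h : ∀ l, 0 ≤ φ l) : 0 ≤ Ew t φ := by
  rw [← Ew_const (S := S) t 0]; exact Ew_mono t fun l _ => h l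
end av

/-! ### one-dimensional walk -/
noncomputable def rr : ℕ → ℤ → ℝ
  | 0, y => if y = 0 then 1 else 0
  | k+1, y => (rr k (y - 1) + rr k (y + 1)) / 2

lemma rr_out (k : ℕ) (y : ℤ) (h : (k:ℤ) < |y|) : rr k y = 0 := by
  induction k generalizing y with
  | zero => simp only [rr]; rw [if_neg]; rintro rfl; simp at h
  | succ k ih =>
    simp only [rr]
    rw [ih, ih]; · simp
    all_goals (push_cast at h; rcases abs_cases y with h1 | h1 <;> rw [lt_abs] <;> omega)

lemma rr_odd (k : ℕ) (y : ℤ) (h : (y + k) % 2 = 1) : rr k y = 0 := by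
  induction k generalizing y with
  | zero => simp only [rr]; rw [if_neg]; rintro rfl; simp at h
  | succ k ih =>
    simp only [rr]
    push_cast at h
    rw [ih, ih]; · simp
    all_goals omega

lemma rr_choose (k j : ℕ) : rr k (2 * j - k) = (k.choose j : ℝ) / 2 ^ k := by
  induction k generalizing j with
  | zero => cases j <;> simp [rr]; omega
  | succ k ih =>
    simp only [rr]
    have h2 := ih j
    rw [show (2 * (j:ℤ) - ((k+1 : ℕ):ℤ) + 1) = 2 * j - k by push_cast; ring, h2]
    cases j with
    | zero =>
      rw [rr_out]
      · simp; field_simp; ring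
      · rw [lt_abs]; push_cast; omega
    | succ j =>
      have h1 := ih j
      rw [show (2 * ((j+1 : ℕ):ℤ) - ((k+1 : ℕ):ℤ) - 1) = 2 * j - k by push_cast; ring, h1,
        Nat.choose_succ_succ]
      push_cast; field_simp; ring

lemma rr_nonneg (k : ℕ) (y : ℤ) : 0 ≤ rr k y := by
  induction k generalizing y with
  | zero => simp only [rr]; split_ifs <;> norm_num
  | succ k ih => simp only [rr]; linarith [ih (y-1), ih (y+1)]

lemma rr_le_mid (k : ℕ) (y : ℤ) : rr k y ≤ (k.choose (k/2) : ℝ) / 2 ^ k := by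
  have h0 : (0:ℝ) ≤ (k.choose (k/2) : ℝ) / 2 ^ k := by positivity
  by_cases h1 : (k:ℤ) < |y|
  · rw [rr_out k y h1]; exact h0
  by_cases h2 : (y + k) % 2 = 1
  · rw [rr_odd k y h2]; exact h0
  have h3 : ∃ j : ℕ, y = 2 * j - k := by
    push Not at h1
    rw [abs_le] at h1
    exact ⟨((y + k) / 2).toNat, by omega⟩
  obtain ⟨j, rfl⟩ := h3
  rw [rr_choose]
  gcongr
  exact Nat.choose_le_middle j k

lemma cb_bound (n : ℕ) : (n.centralBinom : ℝ)^2 * (2 * n + 1) ≤ (4 ^ n)^2 := by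
  induction n with
  | zero => simp
  | succ n ih =>
    have h : ((n:ℝ) + 1) * (n+1).centralBinom = 2 * (2 * n + 1) * n.centralBinom := by
      exact_mod_cast Nat.succ_mul_centralBinom_succ n
    have h1 : (0:ℝ) < (n:ℝ) + 1 := by positivity
    have h2 : ((n+1).centralBinom : ℝ) = 2 * (2 * n + 1) * n.centralBinom / (n + 1) := by
      field_simp; linarith
    rw [h2]; push_cast
    rw [div_pow, div_mul_eq_mul_div, div_le_iff₀ (by positivity)]
    have h3 : (0:ℝ) ≤ (n:ℝ) := by positivity
    have : (2 * (2 * (n:ℝ) + 1) * n.centralBinom)^2 * (2 * (n + 1) + 1)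
        = 4 * ((2 * n + 1) * (2 * n + 3)) * ((n.centralBinom : ℝ)^2 * (2 * n + 1)) := by ring
    rw [this]
    calc 4 * ((2 * (n:ℝ) + 1) * (2 * n + 3)) * ((n.centralBinom : ℝ)^2 * (2 * n + 1))
        ≤ 4 * ((2 * (n:ℝ) + 1) * (2 * n + 3)) * ((4 ^ n)^2) := by gcongr
      _ ≤ 4 * (4 * ((n:ℝ)+1)^2) * ((4 ^ n)^2) :=
          mul_le_mul_of_nonneg_right (by nlinarith) (by positivity)
      _ = _ := by ring

lemma rr_sq (k : ℕ) (y : ℤ) : rr k y ^ 2 ≤ 1 / ((k:ℝ) + 1) := by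
  have h := rr_le_mid k y
  have h0 := rr_nonneg k y
  have h2 : ((k.choose (k/2) : ℝ) / 2 ^ k)^2 ≤ 1 / ((k:ℝ) + 1) := by
    rw [div_pow, div_le_div_iff₀ (by positivity) (by positivity), one_mul]
    rcases Nat.even_or_odd' k with ⟨m, rfl | rfl⟩
    · have := cb_bound m
      rw [Nat.centralBinom] at this
      rw [show 2 * m / 2 = m by omega, show (2:ℝ)^(2*m) = 4^m by rw [pow_mul]; norm_num]
      push_cast; exact this
    · have := cb_bound (m+1)
      have h3 : (m+1).centralBinom = 2 * (2*m+1).choose m := by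
        rw [Nat.centralBinom, show 2 * (m+1) = (2 * m + 1) + 1 by ring, Nat.choose_succ_succ,
          ← Nat.choose_symm_half m]; ring
      rw [h3] at this
      rw [show (2 * m + 1) / 2 = m by omega]
      have h4 : (2:ℝ)^(2*m+1) = 2 * 4^m := by rw [pow_succ, pow_mul]; norm_num; ring
      rw [h4]; push_cast at this ⊢
      rw [show ((4:ℝ) ^ (m + 1))^2 = 16 * (4^m)^2 by ring] at this
      nlinarith [sq_nonneg ((2*m+1).choose m : ℝ)]
  calc _ ≤ ((k.choose (k/2) : ℝ) / 2 ^ k)^2 := by gcongr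
    _ ≤ _ := h2

end

section

abbrev St (d : ℕ) := Fin d × Bool

def ee (s : St d) : V d := Pi.single s.1 (if s.2 then 1 else -1)

def sm (l : List (St d)) : V d := (l.map ee).sum

@[simp] lemma sm_nil : sm ([] : List (St d)) = 0 := rfl
@[simp] lemma sm_cons (s : St d) (l) : sm (s :: l) = ee s + sm l := by simp [sm]
@[simp] lemma sm_append (l l' : List (St d)) : sm (l ++ l') = sm l + sm l' := by simp [sm]

noncomputable def pp (t : ℕ) (x : V d) : ℝ := Ew t fun l : List (St d) => if sm l = x then 1 else 0

lemma pp_succ (t : ℕ) (x : V d) : pp (t+1) x = av fun s : St d => pp t (x - ee s) := by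
  simp only [pp, Ew, sm_cons]
  congr 1; ext s; congr 1; ext l; congr 1; apply propext
  constructor <;> intro h
  · rw [← h]; simp
  · rw [h]; simp

def cnt (l : List (Fin d)) : Fin d → ℕ := fun i => l.count i

lemma cnt_cons (j : Fin d) (l) : cnt (j :: l) = cnt l + Pi.single j 1 := by
  ext i; simp only [cnt, Pi.add_apply, List.count_cons, Pi.single_apply]
  congr 1
  by_cases h : j = i
  · simp [h]
  · simp [h, Ne.symm h]

lemma pp_eq (t : ℕ) (x : V d) :
    pp t x = Ew t fun l : List (Fin d) => ∏ i, rr (cnt l i) (x i) := by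
  induction t generalizing x with
  | zero =>
    simp only [pp, Ew, cnt, List.count_nil, rr, sm_nil]
    rw [Finset.prod_ite_zero]
    simp only [Finset.prod_const_one, Finset.mem_univ, true_imp_iff]
    congr 1; apply propext; constructor
    · rintro rfl; simp
    · intro h; ext i; simp [h i]
  | succ t ih =>
    rw [pp_succ]
    simp only [ih, Ew, av]
    rw [Fintype.sum_prod_type]
    simp only [Fintype.sum_bool, Fintype.card_prod, Fintype.card_bool, Fintype.card_fin]
    push_cast
    rw [mul_comm (d:ℝ) 2, ← div_div, Finset.sum_div]
    congr 1
    apply Finset.sum_congr rfl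
    intro i _
    rw [← Ew_add, div_eq_inv_mul, ← Ew_mul]
    congr 1; ext l
    have key : ∀ (c : Fin d → ℕ) (y : V d), ∏ j, rr (c j) (y j)
      = rr (c i) (y i) * ∏ j ∈ Finset.univ.erase i, rr (c j) (y j) := fun c y =>
        (Finset.mul_prod_erase _ (fun j => rr (c j) (y j)) (Finset.mem_univ i)).symm
    rw [key, key, key, cnt_cons]
    have h1 : ∀ b, ∏ j ∈ Finset.univ.erase i, rr (cnt l j) ((x - ee (i, b)) j) =
        ∏ j ∈ Finset.univ.erase i, rr (cnt l j) (x j) := fun b =>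
      Finset.prod_congr rfl fun j hj => by
        simp [ee, Pi.single_apply, Finset.ne_of_mem_erase hj]
    have h2 : ∏ j ∈ Finset.univ.erase i, rr ((cnt l + Pi.single i 1 : Fin d → ℕ) j) (x j) =
        ∏ j ∈ Finset.univ.erase i, rr (cnt l j) (x j) :=
      Finset.prod_congr rfl fun j hj => by
        simp [Pi.single_apply, Finset.ne_of_mem_erase hj]
    rw [h1, h1, h2]
    simp [ee, rr]
    ring

lemma size_bias (hd : 0 < d) (t : ℕ) (i : Fin d) (φ : (Fin d → ℕ) → ℝ) :
    Ew (t+1) (fun l : List (Fin d) => (cnt l i : ℝ) * φ (cnt l)) =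
      ((t:ℝ)+1) / d * Ew t (fun l : List (Fin d) => φ (cnt l + Pi.single i 1)) := by
  have hd' : (d:ℝ) ≠ 0 := by positivity
  have base : ∀ t : ℕ, ∀ φ : (Fin d → ℕ) → ℝ,
      Ew (t+1) (fun l : List (Fin d) => (cnt l i : ℝ) * φ (cnt l)) =
      av (fun s => Ew t fun l : List (Fin d) => (cnt l i : ℝ) * φ (cnt l + Pi.single s 1)) +
       1 / d * Ew t (fun l : List (Fin d) => φ (cnt l + Pi.single i 1)) := by
    intro t φ
    simp only [Ew]
    have : ∀ s, (Ew t fun l : List (Fin d) => (cnt (s::l) i : ℝ) * φ (cnt (s::l))) =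
      (Ew t fun l : List (Fin d) => (cnt l i : ℝ) * φ (cnt l + Pi.single s 1)) +
       (if s = i then Ew t fun l : List (Fin d) => φ (cnt l + Pi.single i 1) else 0) := by
      intro s
      split_ifs with h
      · rw [← Ew_add]; congr 1; ext l; rw [cnt_cons, h]; simp; ring
      · rw [add_zero]; congr 1; ext l; rw [cnt_cons]; simp [Ne.symm h]
    simp only [this]
    rw [av_add]
    congr 1
    simp [av]; ring
  induction t generalizing φ with
  | zero =>
    rw [base]; simp [Ew, cnt]; simp [av]
  | succ t ih =>
    rw [base]
    have : ∀ s : Fin d, _ := fun s => ih (fun k => φ (k + Pi.single s 1))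
    simp only [this]
    rw [av_mul]
    have e : av (fun s : Fin d => Ew t fun l : List (Fin d) => φ (cnt l + Pi.single i 1 + Pi.single s 1))
      = Ew (t+1) (fun l : List (Fin d) => φ (cnt l + Pi.single i 1)) := by
      simp only [Ew, cnt_cons]
      congr 1; ext s; congr 1; ext l; congr 1; exact add_right_comm _ _ _
    rw [e]; push_cast; field_simp

lemma neg_moment (hd : 0 < d) (I : Finset (Fin d)) (t : ℕ) :
    Ew t (fun l : List (Fin d) => ∏ i ∈ I, (1 / ((cnt l i : ℝ) + 1))) ≤ (d / ((t:ℝ)+1)) ^ I.card := by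
  haveI : Nonempty (Fin d) := ⟨⟨0, hd⟩⟩
  have hd' : (0:ℝ) < d := by positivity
  induction I using Finset.induction_on generalizing t with
  | empty => simp [Ew_const]
  | insert i I hi ih =>
    let φ : (Fin d → ℕ) → ℝ := fun k => (1 / (k i : ℝ)) * ∏ j ∈ I, (1 / ((k j : ℝ) + 1))
    have h := size_bias hd t i φ
    have h1 : Ew t (fun l : List (Fin d) => φ (cnt l + Pi.single i 1)) =
       Ew t (fun l : List (Fin d) => ∏ i ∈ insert i I, (1 / ((cnt l i : ℝ) + 1))) := by
      congr 1; ext l; rw [Finset.prod_insert hi]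
      simp only [φ]
      congr 1
      · simp
      · apply Finset.prod_congr rfl
        intro j hj
        have : j ≠ i := fun h => hi (h ▸ hj)
        simp [Pi.single_apply, this]
    have h2 : Ew (t+1) (fun l : List (Fin d) => (cnt l i : ℝ) * φ (cnt l)) ≤ (d / ((t:ℝ)+1)) ^ I.card := by
      refine le_trans (Ew_mono _ (ψ := fun l : List (Fin d) => ∏ i ∈ I, (1 / ((cnt l i : ℝ) + 1))) ?_) ((ih (t+1)).trans ?_)
      · intro l _
        simp only [φ]
        have hp : (0:ℝ) ≤ ∏ i ∈ I, (1 / ((cnt l i : ℝ) + 1)) := by positivity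
        rw [← mul_assoc]
        apply mul_le_of_le_one_left hp
        rw [mul_one_div]; exact div_self_le_one _
      · gcongr; simp
    rw [h, h1] at h2
    rw [Finset.card_insert_of_notMem hi, pow_succ]
    rw [div_mul_eq_mul_div, div_le_iff₀ hd'] at h2
    rw [mul_div_assoc', le_div_iff₀ (by positivity)]
    linarith

lemma pp_bound (hd : 0 < d) (t : ℕ) (x : V d) : pp t x ^ 2 ≤ (d / ((t:ℝ)+1)) ^ d := by
  haveI : Nonempty (Fin d) := ⟨⟨0, hd⟩⟩
  rw [pp_eq]
  have hn := neg_moment hd Finset.univ t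
  rw [Finset.card_univ, Fintype.card_fin] at hn
  refine (Ew_sq _ _).trans (le_trans (Ew_mono t ?_) hn)
  intro l _
  rw [← Finset.prod_pow]
  exact Finset.prod_le_prod (fun i _ => sq_nonneg _) fun i _ => rr_sq _ _

noncomputable def PP (d t : ℕ) : ℝ := Real.sqrt ((d / ((t:ℝ)+1)) ^ d)

lemma pp_le_PP (hd : 0 < d) (t : ℕ) (x : V d) : pp t x ≤ PP d t := Real.le_sqrt_of_sq_le (pp_bound hd t x)

lemma PP_nonneg (d t : ℕ) : 0 ≤ PP d t := Real.sqrt_nonneg _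

lemma summable_PP (hd : 5 ≤ d) : Summable fun t : ℕ => ((t:ℝ)+1) * PP d t := by
  have hs : Summable fun t : ℕ => Real.sqrt ((d:ℝ)^d) * (1 / ((t:ℝ)+1) ^ (3/2 : ℝ)) := by
    apply Summable.mul_left
    have := (Real.summable_one_div_nat_rpow (p := 3/2)).2 (by norm_num)
    have := (summable_nat_add_iff 1).2 this
    simpa using this
  refine Summable.of_nonneg_of_le (fun t => mul_nonneg (by positivity) (PP_nonneg _ _)) (fun t => ?_) hs
  unfold PP
  have h1 : (1:ℝ) ≤ (t:ℝ)+1 := by simp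
  have h0 : (0:ℝ) < (t:ℝ)+1 := by positivity
  rw [div_pow, Real.sqrt_div (by positivity), mul_div_assoc', mul_comm, mul_div_assoc]
  apply mul_le_mul_of_nonneg_left _ (Real.sqrt_nonneg _)
  rw [Real.sqrt_eq_rpow, ← Real.rpow_natCast, ← Real.rpow_mul h0.le]
  rw [div_le_div_iff₀ (by positivity) (by positivity), one_mul]
  nth_rw 1 [← Real.rpow_one ((t:ℝ)+1)]
  rw [← Real.rpow_add h0]
  apply Real.rpow_le_rpow_of_exponent_le h1
  have : (5:ℝ) ≤ d := by exact_mod_cast hd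
  linarith

end

section

noncomputable def stepV (η : List (V d)) (u : V d) : List (V d) :=
  if u ∈ η then η.dropWhile (fun y => decide (y ≠ u)) else u :: η

def tip (η : List (V d)) : V d := η.headD 0

noncomputable def stp (η : List (V d)) (s : St d) : List (V d) := stepV η (tip η + ee s)

noncomputable def run (η : List (V d)) (l : List (St d)) : List (V d) := l.foldl stp η

lemma dropWhile_mem {η : List (V d)} {u : V d} (h : u ∈ η) :
    ∃ A B, η = A ++ u :: B ∧ u ∉ A ∧ η.dropWhile (fun y => decide (y ≠ u)) = u :: B := by
  induction η with
  | nil => simp at h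
  | cons x η ih =>
    by_cases hx : x = u
    · exact ⟨[], η, by simp [hx], by simp, by simp [List.dropWhile_cons, hx]⟩
    · obtain ⟨A, B, h1, h2, h3⟩ := ih (by simpa [Ne.symm hx] using h)
      refine ⟨x :: A, B, by simp [h1], by simp [h2, Ne.symm hx], ?_⟩
      rw [List.dropWhile_cons, if_pos (by simpa using hx), h3]

lemma stepV_cases (η : List (V d)) (u : V d) :
    (u ∉ η ∧ stepV η u = u :: η) ∨
    (∃ A B, η = A ++ u :: B ∧ u ∉ A ∧ stepV η u = u :: B) := by
  by_cases h : u ∈ η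
  · right
    obtain ⟨A, B, h1, h2, h3⟩ := dropWhile_mem h
    exact ⟨A, B, h1, h2, by rw [stepV, if_pos h, h3]⟩
  · left; exact ⟨h, by rw [stepV, if_neg h]⟩

lemma stepV_cons (η : List (V d)) (u : V d) : ∃ B, stepV η u = u :: B := by
  rcases stepV_cases η u with ⟨_, h⟩ | ⟨A, B, _, _, h⟩ <;> exact ⟨_, h⟩

lemma tip_stepV (η : List (V d)) (u : V d) : tip (stepV η u) = u := by
  obtain ⟨B, h⟩ := stepV_cons η u
  simp [h, tip]

lemma run_append (η : List (V d)) (l l') : run η (l ++ l') = run (run η l) l' := by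
  simp [run, List.foldl_append]

lemma tip_run (η : List (V d)) (l) : tip (run η l) = tip η + sm l := by
  induction l generalizing η with
  | nil => simp [run]
  | cons s l ih =>
    have : run η (s :: l) = run (stp η s) l := rfl
    rw [this, ih, stp, tip_stepV, sm_cons, add_assoc]

lemma mem_stepV {η : List (V d)} {u y : V d} (h : y ∈ stepV η u) : y = u ∨ y ∈ η := by
  rcases stepV_cases η u with ⟨_, h'⟩ | ⟨A, B, h1, _, h'⟩
  · rw [h'] at h; simpa using h
  · rw [h'] at h; subst h1
    simp at h; rcases h with h | h <;> simp [h]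

lemma block_step {N O X Lw : List (V d)} {u : V d} (hO : O <:+ X) (hL : Lw <:+ O)
    (hu : u ∉ Lw.tail) :
    ∃ N' O', stepV (N ++ O) u = N' ++ O' ∧ O' <:+ X ∧ Lw <:+ O' := by
  rcases stepV_cases (N ++ O) u with ⟨_, h'⟩ | ⟨A, B, h1, h2, h'⟩
  · exact ⟨u :: N, O, by simp [h'], hO, hL⟩
  · rw [List.append_eq_append_iff] at h1
    rcases h1 with ⟨C, hC, hC'⟩ | ⟨C, hC, hC'⟩
    · -- A = N ++ C, O = C ++ u :: B
      refine ⟨[], u :: B, by simp [h'], ?_, ?_⟩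
      · exact (List.IsSuffix.trans ⟨C, hC'.symm⟩ hO)
      · obtain ⟨D, hD⟩ := hL
        rw [hC'] at hD
        rw [List.append_eq_append_iff] at hD
        rcases hD with ⟨E, hE, hE'⟩ | ⟨E, hE, hE'⟩
        · -- C = D ++ E , Lw = E ++ u :: B
          cases E with
          | nil => simp at hE'; rw [hE']
          | cons e E => rw [hE'] at hu; simp at hu
        · exact ⟨E, hE'.symm⟩
    · cases C with
      | nil =>
        simp at hC hC'
        refine ⟨[], O, ?_, hO, hL⟩
        rw [h', ← hC']; rfl
      | cons c C =>
        simp at hC'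
        refine ⟨u :: C, O, ?_, hO, hL⟩
        rw [h', hC'.2]; simp

lemma keep_step {X Lw : List (V d)} {u : V d} (hL : Lw <:+ X)
    (hu : u ∉ Lw.tail) : Lw <:+ stepV X u := by
  obtain ⟨N', O', h, _, h2⟩ := block_step (N := []) (List.suffix_refl X) hL hu
  rw [List.nil_append] at h
  rw [h]; exact h2.trans (List.suffix_append _ _)

section det
variable (T m J : ℕ) (S : ℕ → V d) (σ : ℕ → List (V d))

def Good1 (j : ℕ) : Prop := ∀ i k, i ≤ j * m → (j+1) * m ≤ k → k ≤ T → S i ≠ S k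
def Good2 (j : ℕ) : Prop := ∀ k, (j+1) * m ≤ k → k ≤ T → S k ∉ σ 0

lemma mem_sig (hσ : ∀ i < T, σ (i+1) = stepV (σ i) (S (i+1))) (i : ℕ) (hi : i ≤ T) (y : V d)
    (hy : y ∈ σ i) : y ∈ σ 0 ∨ ∃ j ≤ i, y = S j := by
  induction i with
  | zero => exact Or.inl hy
  | succ i ih =>
    rw [hσ i hi] at hy
    rcases mem_stepV hy with h | h
    · exact Or.inr ⟨i+1, le_rfl, h⟩
    · rcases ih (by omega) h with h | ⟨j, hj, h⟩
      · exact Or.inl h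
      · exact Or.inr ⟨j, by omega, h⟩

lemma keep (hσ : ∀ i < T, σ (i+1) = stepV (σ i) (S (i+1))) (a : ℕ) (Lw : List (V d))
    (h0 : Lw <:+ σ a) (hL : ∀ k, a < k → k ≤ T → S k ∉ Lw.tail) (i : ℕ) (hi : a + i ≤ T) :
    Lw <:+ σ (a + i) := by
  induction i with
  | zero => exact h0
  | succ i ih =>
    rw [← add_assoc, hσ (a+i) (by omega)]
    exact keep_step (ih (by omega)) (hL _ (by omega) (by omega))

lemma det_aux (hm : 1 ≤ m) (hσ : ∀ i < T, σ (i+1) = stepV (σ i) (S (i+1))) (j : ℕ) (hJ : J ≤ j)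
    (hj : j * m ≤ T) :
    ∃ Lw, Lw <:+ σ (j * m) ∧
      ((Finset.Ico J j).filter (fun j => Good1 T m S j ∧ Good2 T m S σ j)).card ≤ Lw.length ∧
      ∀ k, j * m < k → k ≤ T → S k ∉ Lw.tail := by
  induction j, hJ using Nat.le_induction with
  | base => exact ⟨[], List.nil_suffix, by simp, by simp⟩
  | succ j hJ ih =>
    have hjm : (j+1) * m = j * m + m := by ring
    obtain ⟨Lw, h1, h2, h3⟩ := ih (by omega)
    rw [Nat.Ico_succ_right_eq_insert_Ico hJ, Finset.filter_insert]
    split_ifs with hg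
    · have blk : ∀ i, i ≤ m → ∃ N O, σ (j * m + i) = N ++ O ∧ O <:+ σ (j * m) ∧ Lw <:+ O := by
        intro i
        induction i with
        | zero => exact fun _ => ⟨[], σ (j * m), by simp, List.suffix_refl _, h1⟩
        | succ i ih =>
          intro hi
          obtain ⟨N, O, a1, a2, a3⟩ := ih (by omega)
          rw [← add_assoc, hσ (j * m + i) (by omega), a1]
          exact block_step a2 a3 (h3 _ (by omega) (by omega))
      obtain ⟨N, O, a1, a2, a3⟩ := blk m le_rfl
      have hO : ∀ k, (j+1) * m ≤ k → k ≤ T → S k ∉ O := by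
        intro k hk hk' hmem
        rcases mem_sig T S σ hσ (j * m) (by omega) _ (a2.subset hmem) with h | ⟨i, hi, h⟩
        · exact hg.2 k hk hk' h
        · exact hg.1 i k hi hk hk' h.symm
      have hN : N ≠ [] := by
        rintro rfl
        obtain ⟨m', rfl⟩ : ∃ m', m = m' + 1 := ⟨m - 1, by omega⟩
        obtain ⟨B, hB⟩ := stepV_cons (σ (j * (m'+1) + m')) (S (j * (m'+1) + m' + 1))
        rw [← hσ _ (by omega), add_assoc, a1, List.nil_append] at hB
        apply hO (j * (m'+1) + (m' + 1)) (by omega) (by omega)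
        rw [hB]; simp
      refine ⟨N.getLast hN :: O, ?_, ?_, ?_⟩
      · rw [hjm, a1]
        refine ⟨N.dropLast, ?_⟩
        conv_rhs => rw [← List.dropLast_append_getLast hN]
        simp
      · rw [Finset.card_insert_of_notMem (by simp)]
        have := a3.length_le
        simp; omega
      · intro k hk hk'
        simpa using hO k (by omega) hk'
    · exact ⟨Lw, by rw [hjm]; exact keep T S σ hσ _ Lw h1 h3 m (by omega), h2, fun k hk hk' => h3 k (by omega) hk'⟩

lemma det_main (hm : 1 ≤ m) (hσ : ∀ i < T, σ (i+1) = stepV (σ i) (S (i+1))) (j i : ℕ) (hJ : J ≤ j)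
    (hj : j * m ≤ i) (hi : i ≤ T) :
    ((Finset.Ico J j).filter (fun j => Good1 T m S j ∧ Good2 T m S σ j)).card ≤ (σ i).length := by
  obtain ⟨Lw, h1, h2, h3⟩ := det_aux T m J S σ hm hσ j hJ (by omega)
  have := keep T S σ hσ _ Lw h1 h3 (i - j * m) (by omega)
  rw [show j * m + (i - j * m) = i by omega] at this
  exact h2.trans this.length_le
end det

end

section

lemma double_sum (g : ℕ → ℝ) (hg : ∀ u, 0 ≤ g u) (A B : ℕ) :
    ∑ i ∈ Finset.range A, ∑ k ∈ Finset.range B, g (i + k) ≤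
      ∑ u ∈ Finset.range (A + B), ((u:ℝ)+1) * g u := by
  have h1 : ∀ i ∈ Finset.range A, ∑ k ∈ Finset.range B, g (i + k) ≤
      ∑ u ∈ Finset.range (A+B), if i ≤ u then g u else 0 := by
    intro i hi
    rw [Finset.mem_range] at hi
    rw [← Finset.sum_filter]
    have : ∑ k ∈ Finset.range B, g (i + k) = ∑ u ∈ Finset.Ico i (i + B), g u := by
      rw [Finset.sum_Ico_eq_sum_range]; simp
    rw [this]
    apply Finset.sum_le_sum_of_subset_of_nonneg
    · intro u hu; simp at hu ⊢; omega
    · intros; exact hg _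
  refine (Finset.sum_le_sum h1).trans ?_
  rw [Finset.sum_comm]
  apply Finset.sum_le_sum
  intro u _
  rw [← Finset.sum_filter, Finset.sum_const, nsmul_eq_mul]
  apply mul_le_mul_of_nonneg_right _ (hg u)
  have : (Finset.filter (fun i => i ≤ u) (Finset.range A)).card ≤ (Finset.range (u+1)).card :=
    Finset.card_le_card (by intro i hi; simp at hi ⊢; omega)
  rw [Finset.card_range] at this
  exact_mod_cast this

noncomputable def ind (P : Prop) : ℝ := if P then 1 else 0
lemma ind_nonneg (P : Prop) : 0 ≤ ind P := by unfold ind; split_ifs <;> norm_num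
lemma ind_le_one (P : Prop) : ind P ≤ 1 := by unfold ind; split_ifs <;> norm_num
lemma ind_true {P : Prop} (h : P) : ind P = 1 := if_pos h
lemma ind_false {P : Prop} (h : ¬ P) : ind P = 0 := if_neg h

lemma E_site [NeZero d] (T k : ℕ) (hk : k ≤ T) (x v : V d) :
    Ew T (fun l : List (St d) => ind (x + sm (l.take k) = v)) = pp k (v - x) := by
  obtain ⟨b, rfl⟩ := Nat.exists_eq_add_of_le hk
  rw [Ew_append]
  unfold pp
  apply Ew_congr
  intro l hl
  subst hl
  simp only [List.take_left]
  rw [Ew_const]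
  unfold ind; congr 1; apply propext
  constructor <;> intro h
  · rw [← h]; simp
  · rw [h]; simp

lemma E_pair [NeZero d] (T i k : ℕ) (hi : i ≤ k) (hk : k ≤ T) (x : V d) :
    Ew T (fun l : List (St d) => ind (x + sm (l.take i) = x + sm (l.take k))) = pp (k - i) (0 : V d) := by
  obtain ⟨b, rfl⟩ := Nat.exists_eq_add_of_le hi
  obtain ⟨c, rfl⟩ := Nat.exists_eq_add_of_le hk
  rw [add_assoc, Ew_append]
  rw [show pp (i + b - i) (0 : V d) = Ew i (fun _ : List (St d) => pp b (0: V d)) by rw [Ew_const]; simp]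
  apply Ew_congr
  intro l hl
  subst hl
  have := E_site (d := d) (b + c) b (by omega) 0 0
  rw [sub_zero] at this
  rw [← this]
  apply Ew_congr
  intro l' _
  rw [List.take_left, List.take_append, List.take_of_length_le (by omega)]
  unfold ind; congr 1; apply propext
  simp

lemma run_step (η : List (V d)) (l : List (St d)) (i : ℕ) (hi : i < l.length) :
    run η (l.take (i+1)) = stepV (run η (l.take i)) (tip η + sm (l.take (i+1))) := by
  rw [List.take_succ_eq_append_getElem hi, run_append, sm_append, ← add_assoc, ← tip_run]
  simp [run, stp]

def hit (n : ℕ) (η : List (V d)) (R : ℕ) (l : List (St d)) : Prop :=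
  ∃ i, R ≤ i ∧ i ≤ l.length ∧ (run η (l.take i)).length ≤ n

lemma hit_prob [NeZero d] (n m T : ℕ) (hm : 1 ≤ m)
    (hε : ∀ a ≥ m, ∀ U : ℕ, ∑ u ∈ Finset.range U, (((u + a : ℕ):ℝ)+1) * PP d (u + a) ≤ 1/8)
    (η : List (V d)) (hη : η.length ≤ n) :
    Ew T (fun l : List (St d) => ind (hit n η (2 * (2 * (n+1)) * m) l)) ≤ 1/2 := by
  have hd : 0 < d := Nat.pos_of_ne_zero (NeZero.ne d)
  set J := 2 * (n+1) with hJ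
  have hJpos : (0:ℝ) < J := by rw [hJ]; positivity
  let x := tip η
  have point : ∀ l : List (St d), l.length = T → ind (hit n η (2 * J * m) l) ≤
      (∑ u ∈ Finset.range (T + 1 - J * m), ∑ v ∈ η.toFinset, ind (x + sm (l.take (u + J * m)) = v)) +
      2 / J * ∑ j ∈ Finset.Ico J (2 * J), ∑ i ∈ Finset.range (j * m + 1),
        ∑ k ∈ Finset.range (T + 1 - (j+1) * m),
          ind (x + sm (l.take (j * m - i)) = x + sm (l.take ((j+1)*m + k))) := by
    intro l hl
    have n1 : 0 ≤ ∑ u ∈ Finset.range (T + 1 - J * m), ∑ v ∈ η.toFinset, ind (x + sm (l.take (u + J * m)) = v) :=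
      Finset.sum_nonneg fun _ _ => Finset.sum_nonneg fun _ _ => ind_nonneg _
    have n2 : ∀ j, 0 ≤ ∑ i ∈ Finset.range (j * m + 1),
        ∑ k ∈ Finset.range (T + 1 - (j+1) * m),
          ind (x + sm (l.take (j * m - i)) = x + sm (l.take ((j+1)*m + k))) := fun j =>
      Finset.sum_nonneg fun _ _ => Finset.sum_nonneg fun _ _ => ind_nonneg _
    have n3 : 0 ≤ 2 / (J:ℝ) * ∑ j ∈ Finset.Ico J (2 * J), ∑ i ∈ Finset.range (j * m + 1),
        ∑ k ∈ Finset.range (T + 1 - (j+1) * m),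
          ind (x + sm (l.take (j * m - i)) = x + sm (l.take ((j+1)*m + k))) :=
      mul_nonneg (by positivity) (Finset.sum_nonneg fun j _ => n2 j)
    by_cases hh : hit n η (2 * J * m) l
    swap
    · rw [ind_false hh]; linarith
    rw [ind_true hh]
    obtain ⟨t, ht1, ht2, ht3⟩ := hh
    by_cases hB : ∃ k, J * m ≤ k ∧ k ≤ T ∧ x + sm (l.take k) ∈ η
    · obtain ⟨k, hk1, hk2, hk3⟩ := hB
      have : 1 ≤ ∑ u ∈ Finset.range (T + 1 - J * m), ∑ v ∈ η.toFinset, ind (x + sm (l.take (u + J * m)) = v) := by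
        have hk : k - J * m ∈ Finset.range (T + 1 - J * m) := by rw [Finset.mem_range]; omega
        refine le_trans ?_ (Finset.single_le_sum (f := fun u => ∑ v ∈ η.toFinset, ind (x + sm (l.take (u + J * m)) = v)) (fun _ _ => Finset.sum_nonneg fun _ _ => ind_nonneg _) hk)
        refine le_trans ?_ (Finset.single_le_sum (fun _ _ => ind_nonneg _) (List.mem_toFinset.2 hk3))
        rw [ind_true]
        rw [Nat.sub_add_cancel hk1]
      linarith
    · push Not at hB
      let S : ℕ → V d := fun i => x + sm (l.take i)
      let σ : ℕ → List (V d) := fun i => run η (l.take i)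
      have hσ : ∀ i < T, σ (i+1) = stepV (σ i) (S (i+1)) := fun i hi => run_step η l i (by omega)
      have hdet := (det_main T m J S σ hm hσ (2 * J) t (by omega) ht1 (by omega)).trans ht3
      have hg2 : ∀ j ∈ Finset.Ico J (2*J), Good2 T m S σ j := by
        intro j hj k hk hk'
        rw [Finset.mem_Ico] at hj
        exact hB k (le_trans (Nat.mul_le_mul_right m (by omega)) hk) hk'
      have hbad : ∀ j, ¬ Good1 T m S j → 1 ≤ ∑ i ∈ Finset.range (j * m + 1),
        ∑ k ∈ Finset.range (T + 1 - (j+1) * m),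
          ind (x + sm (l.take (j * m - i)) = x + sm (l.take ((j+1)*m + k))) := by
        intro j hj
        unfold Good1 at hj
        push Not at hj
        obtain ⟨i, k, h1, h2, h3, h4⟩ := hj
        have hi : j * m - i ∈ Finset.range (j * m + 1) := by rw [Finset.mem_range]; omega
        have hk : k - (j+1) * m ∈ Finset.range (T + 1 - (j+1) * m) := by rw [Finset.mem_range]; omega
        refine le_trans ?_ (Finset.single_le_sum (f := fun i => ∑ k ∈ Finset.range (T + 1 - (j+1) * m),
          ind (x + sm (l.take (j * m - i)) = x + sm (l.take ((j+1)*m + k)))) (fun _ _ => Finset.sum_nonneg fun _ _ => ind_nonneg _) hi)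
        refine le_trans ?_ (Finset.single_le_sum (fun _ _ => ind_nonneg _) hk)
        rw [ind_true]
        rw [Nat.add_sub_cancel' h2, Nat.sub_sub_self h1]
        exact h4
      have hcard : J ≤ 2 * ((Finset.Ico J (2 * J)).filter (fun j => ¬ Good1 T m S j)).card := by
        have e1 : (Finset.Ico J (2 * J)).filter (fun j => Good1 T m S j ∧ Good2 T m S σ j) =
          (Finset.Ico J (2 * J)).filter (fun j => Good1 T m S j) :=
          Finset.filter_congr fun j hj => ⟨fun h => h.1, fun h => ⟨h, hg2 j hj⟩⟩
        rw [e1] at hdet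
        have e2 := Finset.card_filter_add_card_filter_not (s := Finset.Ico J (2*J)) (fun j => Good1 T m S j)
        rw [Nat.card_Ico] at e2
        omega
      have hsum : (((Finset.Ico J (2 * J)).filter (fun j => ¬ Good1 T m S j)).card : ℝ) ≤
        ∑ j ∈ Finset.Ico J (2 * J), ∑ i ∈ Finset.range (j * m + 1),
        ∑ k ∈ Finset.range (T + 1 - (j+1) * m),
          ind (x + sm (l.take (j * m - i)) = x + sm (l.take ((j+1)*m + k))) := by
        rw [Finset.card_eq_sum_ones]; push_cast
        refine (Finset.sum_le_sum ?_).trans (Finset.sum_le_sum_of_subset_of_nonneg (Finset.filter_subset _ _) fun j _ _ => n2 j)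
        intro j hj
        exact hbad j (Finset.mem_filter.1 hj).2
      have hcard' : (J:ℝ) ≤ 2 * (((Finset.Ico J (2 * J)).filter (fun j => ¬ Good1 T m S j)).card : ℝ) := by
        exact_mod_cast hcard
      refine le_trans ?_ (le_add_of_nonneg_left n1)
      rw [div_mul_eq_mul_div, le_div_iff₀ hJpos]
      linarith
  refine (Ew_mono T point).trans ?_
  rw [Ew_add, Ew_mul, Ew_sum, Ew_sum]
  have b1 : ∑ u ∈ Finset.range (T + 1 - J * m), Ew T (fun l : List (St d) => ∑ v ∈ η.toFinset, ind (x + sm (l.take (u + J * m)) = v)) ≤ 1/8 := by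
    refine le_trans (Finset.sum_le_sum ?_) (hε (J * m) (by nlinarith) (T + 1 - J * m))
    intro u hu
    rw [Finset.mem_range] at hu
    rw [Ew_sum]
    refine (Finset.sum_le_sum (g := fun _ => PP d (u + J * m)) ?_).trans ?_
    · intro v _
      rw [E_site T _ (by omega)]
      exact pp_le_PP hd _ _
    · rw [Finset.sum_const, nsmul_eq_mul]
      apply mul_le_mul_of_nonneg_right _ (PP_nonneg _ _)
      have : η.toFinset.card ≤ u + J * m + 1 := by
        have := List.toFinset_card_le η
        nlinarith
      exact_mod_cast this
  have b2 : ∀ j ∈ Finset.Ico J (2 * J), Ew T (fun l : List (St d) => ∑ i ∈ Finset.range (j * m + 1),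
        ∑ k ∈ Finset.range (T + 1 - (j+1) * m),
          ind (x + sm (l.take (j * m - i)) = x + sm (l.take ((j+1)*m + k)))) ≤ 1/8 := by
    intro j hj
    have hjm : (j+1) * m = j * m + m := by ring
    refine le_trans ?_ (hε m le_rfl (j * m + 1 + (T + 1 - (j+1) * m)))
    refine le_trans ?_ ((double_sum (fun u => PP d (u + m)) (fun u => PP_nonneg _ _) (j * m + 1) (T + 1 - (j+1) * m)).trans ?_)
    · rw [Ew_sum]
      apply Finset.sum_le_sum
      intro i hi
      rw [Ew_sum]
      apply Finset.sum_le_sum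
      intro k hk
      rw [Finset.mem_range] at hi hk
      rw [E_pair T _ _ (by omega) (by omega)]
      rw [show (j+1) * m + k - (j * m - i) = i + k + m by omega]
      exact pp_le_PP hd _ _
    · apply Finset.sum_le_sum
      intro u _
      apply mul_le_mul_of_nonneg_right _ (PP_nonneg _ _)
      push_cast
      have : (0:ℝ) ≤ m := by positivity
      linarith
  have b3 := Finset.sum_le_sum b2
  rw [Finset.sum_const, Nat.card_Ico, nsmul_eq_mul] at b3
  have : ((2 * J - J : ℕ) : ℝ) = J := by congr 1; omega
  rw [this] at b3
  have b4 : 2 / (J:ℝ) * ∑ j ∈ Finset.Ico J (2 * J), Ew T (fun l : List (St d) => ∑ i ∈ Finset.range (j * m + 1),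
        ∑ k ∈ Finset.range (T + 1 - (j+1) * m),
          ind (x + sm (l.take (j * m - i)) = x + sm (l.take ((j+1)*m + k)))) ≤ 1/4 := by
    rw [div_mul_eq_mul_div, div_le_iff₀ hJpos]
    linarith
  linarith

/-! ### occupation function -/
noncomputable def FF (n : ℕ) : ℕ → List (V d) → ℝ
  | 0, _ => 0
  | T+1, η => ind (η.length ≤ n) + av fun s => FF n T (stp η s)

noncomputable def hh (n : ℕ) : ℕ → List (V d) → ℝ
  | 0, η => ind (η.length ≤ n)
  | T+1, η => if η.length ≤ n then 1 else av fun s => hh n T (stp η s)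

lemma hh_eq [NeZero d] (n T : ℕ) (η : List (V d)) :
    hh n T η = Ew T fun l : List (St d) => ind (hit n η 0 l) := by
  induction T generalizing η with
  | zero => simp [hh, Ew, hit, run]
  | succ T ih =>
    simp only [hh, Ew]
    split_ifs with h
    · rw [show (fun (s : St d) => Ew T fun l => ind (hit n η 0 (s :: l))) = fun _ => 1 from ?_, av_const]
      ext s
      rw [← Ew_const (S := St d) T 1]
      congr 1; ext l
      rw [ind_true]
      exact ⟨0, le_rfl, by simp, by simpa [run] using h⟩
    · congr 1; ext s; rw [ih]; congr 1; ext l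
      unfold ind; congr 1; apply propext
      constructor
      · rintro ⟨i, _, h2, h3⟩
        exact ⟨i+1, by simp, by simpa using h2, by simpa [run] using h3⟩
      · rintro ⟨i, _, h2, h3⟩
        cases i with
        | zero => exact absurd (by simpa [run] using h3) h
        | succ i => exact ⟨i, by simp, by simpa using h2, by simpa [run] using h3⟩

lemma FF_add [NeZero d] (n T R : ℕ) (η : List (V d)) :
    FF n (T + R) η ≤ R + Ew R (fun l : List (St d) => FF n T (run η l)) := by
  induction R generalizing η with
  | zero => simp [Ew, run]
  | succ R ih =>
    rw [← add_assoc]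
    simp only [FF, Ew]
    have h1 := ind_le_one (η.length ≤ n)
    have h2 : (av fun s => FF n (T+R) (stp η s)) ≤
       av fun s => R + Ew R (fun l : List (St d) => FF n T (run (stp η s) l)) := av_mono fun s => ih _
    rw [av_add, av_const] at h2
    push_cast
    have : ∀ s l, run η (s :: l) = run (stp η s) l := fun _ _ => rfl
    simp only [this]
    linarith

lemma hh_le_one [NeZero d] (n T : ℕ) (η : List (V d)) : hh n T η ≤ 1 := by
  rw [hh_eq, ← Ew_const (S := St d) T 1]
  exact Ew_mono T fun l _ => ind_le_one _

lemma hh_nonneg [NeZero d] (n T : ℕ) (η : List (V d)) : 0 ≤ hh n T η := by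
  rw [hh_eq]
  exact Ew_nonneg T fun l => ind_nonneg _

lemma FF_le [NeZero d] (n m : ℕ) (hm : 1 ≤ m)
    (hε : ∀ a ≥ m, ∀ U : ℕ, ∑ u ∈ Finset.range U, (((u + a : ℕ):ℝ)+1) * PP d (u + a) ≤ 1/8)
    (T : ℕ) (η : List (V d)) :
    FF n T η ≤ 2 * ((2 * (2 * (n+1)) * m : ℕ) : ℝ) * hh n T η := by
  set R := 2 * (2 * (n+1)) * m with hR
  induction T using Nat.strong_induction_on generalizing η with
  | _ T ih =>
  have hR0 : (0:ℝ) ≤ R := by positivity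
  by_cases h : η.length ≤ n
  · have h1 : hh n T η = 1 := by
      cases T <;> simp [hh, h, ind]
    rw [h1, mul_one]
    rcases Nat.lt_or_ge T (R+1) with hT | hT
    · have := FF_add n 0 T η
      simp only [FF, Ew_const, zero_add, add_zero] at this
      have h2 : (T:ℝ) ≤ R := by exact_mod_cast Nat.lt_succ_iff.1 hT
      linarith
    · obtain ⟨T', rfl⟩ := Nat.exists_eq_add_of_le' (show R ≤ T by omega)
      have hRpos : 0 < R := by positivity
      have h2 := FF_add n T' R η
      have h3 : Ew R (fun l : List (St d) => FF n T' (run η l)) ≤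
          Ew R (fun l : List (St d) => 2 * (R:ℝ) * hh n T' (run η l)) :=
        Ew_mono R fun l _ => ih T' (by omega) _
      rw [Ew_mul] at h3
      have h4 : Ew R (fun l : List (St d) => hh n T' (run η l)) ≤ 1/2 := by
        refine le_trans ?_ (hit_prob n m (R + T') hm hε η h)
        rw [Ew_append]
        apply Ew_mono
        intro l hl
        rw [hh_eq]
        apply Ew_mono
        intro l' _
        unfold ind
        split_ifs with c1 c2
        · exact le_rfl
        · exfalso; apply c2
          obtain ⟨i, _, h2, h3⟩ := c1
          refine ⟨R + i, by omega, by simp; omega, ?_⟩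
          rw [List.take_append, hl, List.take_of_length_le (by omega), run_append]
          simpa using h3
        · norm_num
        · exact le_rfl
      nlinarith
  · cases T with
    | zero => simp [FF, hh, ind, h]
    | succ T =>
      simp only [FF, hh, if_neg h, ind_false h, zero_add]
      rw [← av_mul]
      exact av_mono fun s => ih T (by omega) _

lemma FF_mono [NeZero d] (n T : ℕ) (η : List (V d)) : FF n T η ≤ FF n (T+1) η := by
  induction T generalizing η with
  | zero =>
    simp only [FF, av_const, add_zero]; exact ind_nonneg _
  | succ T ih =>
    rw [FF]; conv_rhs => rw [FF]
    exact add_le_add_right (av_mono fun s => ih _) _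

/-- The Lyapunov function. -/
theorem lyap (hd : 5 ≤ d) : ∃ C : ℝ, 0 < C ∧ ∀ n : ℕ, 1 ≤ n → ∃ f : List (V d) → ℝ,
    (∀ η, 0 ≤ f η) ∧ (∀ η, f η ≤ C * n) ∧
    ∀ η, ind (η.length ≤ n) + av (fun s => f (stp η s)) ≤ f η := by
  haveI : NeZero d := ⟨by omega⟩
  have hs := summable_PP hd
  have ht := tendsto_sum_nat_add (fun t : ℕ => ((t:ℝ)+1) * PP d t)
  obtain ⟨m0, hm0⟩ := Filter.eventually_atTop.1 (ht.eventually_le_const (show (0:ℝ) < 1/8 by norm_num))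
  let m := m0 + 1
  have hε : ∀ a ≥ m, ∀ U : ℕ, ∑ u ∈ Finset.range U, (((u + a : ℕ):ℝ)+1) * PP d (u + a) ≤ 1/8 := by
    intro a ha U
    refine le_trans ?_ (hm0 a (by omega))
    refine Summable.sum_le_tsum _ (fun i _ => mul_nonneg (by positivity) (PP_nonneg _ _)) ?_
    exact (summable_nat_add_iff a).2 hs
  refine ⟨16 * m, by positivity, fun n hn => ?_⟩
  have hb : ∀ T (η : List (V d)), FF n T η ≤ 16 * m * n := by
    intro T η
    have h1 := FF_le n m (by omega) hε T η
    have h2 := hh_le_one n T η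
    have h3 : (0:ℝ) ≤ 2 * ((2 * (2 * (n+1)) * m : ℕ) : ℝ) := by positivity
    have h4 := mul_le_of_le_one_right h3 h2
    refine h1.trans (h4.trans ?_)
    push_cast
    have : (1:ℝ) ≤ n := by exact_mod_cast hn
    have : (0:ℝ) ≤ m := by positivity
    nlinarith
  have hbdd : ∀ η : List (V d), BddAbove (Set.range fun T => FF n T η) := fun η =>
    ⟨_, by rintro _ ⟨T, rfl⟩; exact hb T η⟩
  have hmono : ∀ η : List (V d), Monotone fun T => FF n T η := fun η =>
    monotone_nat_of_le_succ fun T => FF_mono n T η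
  refine ⟨fun η => ⨆ T, FF n T η, fun η => ?_, fun η => ciSup_le fun T => hb T η, fun η => ?_⟩
  · exact le_ciSup (hbdd η) 0
  · have hlim : Filter.Tendsto (fun T => ind (η.length ≤ n) + av (fun s => FF n T (stp η s))) Filter.atTop
        (nhds (ind (η.length ≤ n) + av (fun s => ⨆ T, FF n T (stp η s)))) := by
      apply Filter.Tendsto.const_add
      unfold av
      apply Filter.Tendsto.div_const
      exact tendsto_finset_sum _ fun s _ => tendsto_atTop_ciSup (hmono _) (hbdd _)
    refine le_of_tendsto' hlim fun T => ?_
    exact le_ciSup (hbdd η) (T+1)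

end

section

lemma adj_ee (x : V d) (s : St d) : adj x (x + ee s) := by
  unfold adj
  rw [Finset.sum_eq_single s.1]
  · simp [ee]; split_ifs <;> simp
  · intro i _ hi
    simp [ee, hi]
  · simp

lemma adj_symm {x y : V d} (h : adj x y) : adj y x := by
  unfold adj at *
  rw [← h]; exact Finset.sum_congr rfl fun i _ => abs_sub_comm _ _

lemma adj_ne {x y : V d} (h : adj x y) : x ≠ y := by
  rintro rfl; simp [adj] at h

lemma adj_exists {x y : V d} (h : adj x y) : ∃ s : St d, y = x + ee s := by
  unfold adj at h
  have : ∃ i, x i ≠ y i := by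
    by_contra hc; push Not at hc
    simp [hc] at h
  obtain ⟨i, hi⟩ := this
  have h1 : ∀ j, j ≠ i → x j = y j := by
    intro j hj
    by_contra hc
    have h2 : ∑ k ∈ {i, j}, |x k - y k| ≤ ∑ k, |x k - y k| :=
      Finset.sum_le_sum_of_subset_of_nonneg (Finset.subset_univ _) fun _ _ _ => abs_nonneg _
    rw [Finset.sum_pair hj.symm, h] at h2
    have := Int.one_le_abs (sub_ne_zero.2 hi)
    have := Int.one_le_abs (sub_ne_zero.2 hc)
    omega
  have h3 : |x i - y i| = 1 := by
    rw [← h]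
    symm
    apply Finset.sum_eq_single i
    · intro j _ hj; rw [h1 j hj]; simp
    · simp
  rcases abs_eq (by norm_num : (0:ℤ) ≤ 1) |>.1 h3 with h4 | h4
  · refine ⟨(i, false), ?_⟩
    ext j
    by_cases hj : j = i
    · subst hj; simp [ee]; omega
    · simp [ee, hj, h1 j hj]
  · refine ⟨(i, true), ?_⟩
    ext j
    by_cases hj : j = i
    · subst hj; simp [ee]; omega
    · simp [ee, hj, h1 j hj]

lemma ee_inj {s t : St d} (h : ee s = ee t) : s = t := by
  obtain ⟨i, b⟩ := s
  obtain ⟨j, c⟩ := t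
  have h1 := congrFun h i
  by_cases hij : i = j
  · subst hij
    cases b <;> cases c <;> simp [ee] at h1 ⊢
  · exfalso
    cases b <;> simp [ee, hij] at h1

def PF (A : Finset (V d)) : Set (V d → V d) :=
  {p | (∀ x ∈ A, adj x (p x)) ∧ (∀ x, x ∉ A → p x = x) ∧ ∀ x, ∃ k, p^[k] x ∉ A}

lemma PF_finite (A : Finset (V d)) : (PF A).Finite := by
  refine (Set.finite_range (fun g : A → St d => fun x => if h : x ∈ A then x + ee (g ⟨x, h⟩) else x)).subset ?_
  rintro p ⟨h1, h2, -⟩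
  choose g hg using fun a : A => adj_exists (h1 a a.2)
  refine ⟨g, ?_⟩
  ext1 x
  by_cases h : x ∈ A
  · simp only [h, dif_pos]; exact (hg ⟨x, h⟩).symm
  · simp only [h, dif_neg, not_false_eq_true]; exact (h2 x h).symm

noncomputable def PFf (A : Finset (V d)) : Finset (V d → V d) := (PF_finite A).toFinset
lemma mem_PFf {A : Finset (V d)} {p} : p ∈ PFf A ↔ p ∈ PF A := by simp [PFf]
noncomputable def NN (A : Finset (V d)) : ℕ := (PFf A).card

noncomputable def restr (p : V d → V d) (H : Finset (V d)) : V d → V d := fun v => if v ∈ H then v else p v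

lemma iter_agree {p q : V d → V d} {x : V d} (k : ℕ) (h : ∀ j < k, p (p^[j] x) = q (p^[j] x)) : q^[k] x = p^[k] x := by
  induction k with
  | zero => rfl
  | succ k ih =>
    rw [Function.iterate_succ_apply', Function.iterate_succ_apply', ih fun j hj => h j (by omega), h k (by omega)]

lemma restr_mem {A H : Finset (V d)} {p} (hp : p ∈ PF A) : restr p H ∈ PF (A \ H) := by
  obtain ⟨h1, h2, h3⟩ := hp
  refine ⟨?_, ?_, ?_⟩
  · intro x hx; rw [Finset.mem_sdiff] at hx; simp [restr, hx.2, h1 x hx.1]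
  · intro x hx; rw [Finset.mem_sdiff] at hx
    unfold restr; split_ifs with h
    · rfl
    · exact h2 x fun hA => hx ⟨hA, h⟩
  · intro x
    obtain ⟨k, hk⟩ := h3 x
    by_contra hc; push Not at hc
    have : p^[k] x = (restr p H)^[k] x := by
      apply iter_agree
      intro j _
      have := hc j
      rw [Finset.mem_sdiff] at this
      simp [restr, this.2]
    rw [this] at hk
    exact hk (Finset.mem_sdiff.1 (hc k)).1

lemma extend_mem {A : Finset (V d)} {p} (hp : p ∈ PF A) {x u : V d} (hx : x ∉ A) (hu : adj x u)
    (ho : ∀ k, p^[k] u ≠ x) : Function.update p x u ∈ PF (insert x A) := by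
  obtain ⟨h1, h2, h3⟩ := hp
  have key : ∀ y, (∀ k, p^[k] y ≠ x) → ∃ k, (Function.update p x u)^[k] y ∉ insert x A := by
    intro y hy
    obtain ⟨k, hk⟩ := h3 y
    refine ⟨k, ?_⟩
    rw [iter_agree (p := p) k fun j _ => by rw [Function.update_of_ne (hy j)]]
    simp [hk, hy k]
  refine ⟨?_, ?_, ?_⟩
  · intro y hy
    by_cases h : y = x
    · subst h; simpa using hu
    · rw [Function.update_of_ne h]; exact h1 y (by simpa [h] using hy)
  · intro y hy
    simp at hy
    rw [Function.update_of_ne hy.1]; exact h2 y hy.2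
  · intro y
    by_cases hy : ∃ k, p^[k] y = x
    · have hk := Nat.find_spec hy
      have hm : ∀ j < Nat.find hy, p^[j] y ≠ x := fun j hj => Nat.find_min hy hj
      set k := Nat.find hy
      obtain ⟨m, hm'⟩ := key u ho
      refine ⟨m + 1 + k, ?_⟩
      rw [Function.iterate_add_apply, iter_agree (p := p) k fun j hj => by rw [Function.update_of_ne (hm j hj)], hk,
        Function.iterate_succ_apply]
      simpa using hm'
    · push Not at hy; exact key y hy

lemma chain_agree {F G : V d → V d} {L : List (V d)} {x : V d} (h1 : (L ++ [x]).IsChain (fun a b => F a = b))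
    (h2 : (L ++ [x]).IsChain (fun a b => G a = b)) : ∀ v ∈ L, F v = G v := by
  induction L with
  | nil => simp
  | cons a L ih =>
    obtain ⟨b, M, hM⟩ : ∃ b M, L ++ [x] = b :: M := by cases L <;> simp
    have e : a :: L ++ [x] = a :: b :: M := by simp [hM]
    rw [e, List.isChain_cons_cons] at h1 h2
    intro v hv
    rcases List.mem_cons.1 hv with rfl | hv
    · rw [h1.1, h2.1]
    · exact ih (by rw [hM]; exact h1.2) (by rw [hM]; exact h2.2) v hv

lemma orbit_path {A : Finset (V d)} {F} (hF : F ∈ PF A) {x u : V d} (hux : u ≠ x) (h : ∃ k, F^[k] u = x) :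
    ∃ L : List (V d), (L ++ [x]).IsChain (fun a b => F a = b) ∧ L.head? = some u ∧ L.Nodup ∧ x ∉ L ∧ ∀ v ∈ L, v ∈ A := by
  have hk := Nat.find_spec h
  have hm : ∀ j < Nat.find h, F^[j] u ≠ x := fun j hj => Nat.find_min h hj
  set k := Nat.find h
  have hk0 : k ≠ 0 := by
    intro h0; rw [h0] at hk; exact hux hk
  refine ⟨(List.range k).map (fun i => F^[i] u), ?_, ?_, ?_, ?_, ?_⟩
  · have : (List.range k).map (fun i => F^[i] u) ++ [x] = (List.range (k+1)).map (fun i => F^[i] u) := by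
      rw [List.range_succ, List.map_append]; simp [hk]
    rw [this, List.isChain_map, List.isChain_iff_getElem]
    intro i hi
    simp [Function.iterate_succ_apply']
  · obtain ⟨m, hm'⟩ := Nat.exists_eq_succ_of_ne_zero hk0
    rw [hm']; simp [List.range_succ_eq_map]
  · refine List.Nodup.map_on ?_ List.nodup_range
    have key : ∀ i j, i < j → j < k → F^[i] u ≠ F^[j] u := by
      intro i j hij hj he
      apply hm (k - j + i) (by omega)
      rw [Function.iterate_add_apply, he, ← Function.iterate_add_apply]
      rw [show k - j + j = k by omega, hk]
    intro i hi j hj he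
    rw [List.mem_range] at hi hj
    rcases lt_trichotomy i j with h' | h' | h'
    · exact absurd he (key i j h' hj)
    · exact h'
    · exact absurd he.symm (key j i h' hi)
  · simp only [List.mem_map, List.mem_range, not_exists, not_and]
    exact hm
  · simp only [List.mem_map, List.mem_range]
    rintro v ⟨i, hi, rfl⟩
    by_contra hv
    have hfix := hF.2.1 _ hv
    have : F^[k] u = F^[i] u := by
      rw [show k = (k - i) + i by omega, Function.iterate_add_apply]
      exact Function.iterate_fixed hfix _
    exact hm i hi (this ▸ hk)

def SSset (B : Finset (V d)) (z : V d) : Set (List (V d)) :=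
  {η | η.Nodup ∧ (∀ v ∈ η, v ∈ B) ∧ η.IsChain adj ∧ η.getLast? = some z}

lemma SS_finite (B : Finset (V d)) (z : V d) : (SSset B z).Finite := by
  refine ((List.finite_length_le B B.card).image (List.map Subtype.val)).subset ?_
  rintro η ⟨h1, h2, -, -⟩
  refine ⟨η.attach.map fun v => ⟨v.1, h2 v.1 v.2⟩, ?_, ?_⟩
  · simp only [Set.mem_ofPred_eq, List.length_map, List.length_attach]
    rw [← List.toFinset_card_of_nodup h1]
    exact Finset.card_le_card fun v hv => h2 v (by simpa using hv)
  · rw [List.map_map]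
    exact List.attach_map_subtype_val η

noncomputable def SS (B : Finset (V d)) (z : V d) : Finset (List (V d)) := (SS_finite B z).toFinset
lemma mem_SS {B : Finset (V d)} {z : V d} {η} : η ∈ SS B z ↔ η.Nodup ∧ (∀ v ∈ η, v ∈ B) ∧ η.IsChain adj ∧ η.getLast? = some z := by
  simp [SS, SSset]

lemma stepV_path {L t : List (V d)} {x : V d} (h : x ∉ L) : stepV (L ++ x :: t) x = x :: t := by
  unfold stepV
  rw [if_pos (by simp)]
  induction L with
  | nil => simp [List.dropWhile_cons]
  | cons a L ih =>
    simp only [List.mem_cons, not_or] at h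
    rw [List.cons_append, List.dropWhile_cons, if_pos (by simpa using fun e => h.1 e.symm), ih h.2]

noncomputable def TT (B : Finset (V d)) (z : V d) (η'' : List (V d)) : Finset (List (V d)) :=
  (insert [] (SS B z)).filter fun η => (η = [] ∧ η'' = [z]) ∨ (η ∈ SS B z ∧ ∃ s, stp η s = η'')

/-- relation describing the injection -/
def Rel (B : Finset (V d)) (z x : V d) (t : List (V d)) (F : V d → V d) (s' : St d) (q : List (V d) × (V d → V d)) : Prop :=
  (∃ L : List (V d), q.1 = L ++ x :: t ∧ L.head? = some (x + ee s') ∧ (L ++ [x]).IsChain (fun a b => F a = b) ∧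
    q.2 = restr F L.toFinset) ∨ (q.1 = t ∧ q.2 = Function.update F x (x + ee s'))

lemma Rel_ex {B : Finset (V d)} {z x : V d} {t : List (V d)} (hη : x :: t ∈ SS B z) {F} (hF : F ∈ PF (B \ (x :: t).toFinset))
    (s' : St d) : ∃ q, Rel B z x t F s' q ∧ q.1 ∈ TT B z (x :: t) ∧ q.2 ∈ PF (B \ q.1.toFinset) := by
  obtain ⟨hn, hB, hc, hl⟩ := mem_SS.1 hη
  have hxu := adj_ee x s'
  by_cases ho : ∃ k, F^[k] (x + ee s') = x
  · obtain ⟨L, h1, h2, h3, h4, h5⟩ := orbit_path hF (adj_ne hxu).symm ho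
    refine ⟨(L ++ x :: t, restr F L.toFinset), Or.inl ⟨L, rfl, h2, h1, rfl⟩, ?_, ?_⟩
    · have hS : L ++ x :: t ∈ SS B z := by
        rw [mem_SS]
        refine ⟨?_, ?_, ?_, ?_⟩
        · rw [List.nodup_append']
          refine ⟨h3, hn, ?_⟩
          intro v hv hv'
          have := h5 v hv
          rw [Finset.mem_sdiff, List.mem_toFinset] at this
          exact this.2 hv'
        · intro v hv
          rcases List.mem_append.1 hv with hv | hv
          · exact (Finset.mem_sdiff.1 (h5 v hv)).1
          · exact hB v hv
        · rw [List.isChain_append] at h1 ⊢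
          have hadj : ∀ a ∈ L, adj a (F a) := fun a ha => hF.1 a (h5 a ha)
          refine ⟨?_, hc, ?_⟩
          · have := h1.1
            rw [List.isChain_iff_getElem] at this ⊢
            intro i hi
            rw [← this i hi]; exact hadj _ (List.getElem_mem _)
          · intro a ha b hb
            simp at hb; subst hb
            have := h1.2.2 a ha x (by simp)
            rw [← this]; exact hadj _ (List.mem_of_getLast? ha)
        · rw [List.getLast?_append, hl]; rfl
      rw [TT, Finset.mem_filter]
      refine ⟨Finset.mem_insert_of_mem hS, Or.inr ⟨hS, ?_⟩⟩
      obtain ⟨s, hs⟩ := adj_exists (adj_symm hxu)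
      refine ⟨s, ?_⟩
      have : tip (L ++ x :: t) = x + ee s' := by
        cases L with
        | nil => simp at h2
        | cons a L => simpa [tip] using h2
      rw [stp, this, ← hs, stepV_path h4]
    · have := restr_mem (H := L.toFinset) hF
      convert this using 2
      rw [sdiff_sdiff]; congr 1
      ext v; simp; tauto
  · push Not at ho
    refine ⟨(t, Function.update F x (x + ee s')), Or.inr ⟨rfl, rfl⟩, ?_, ?_⟩
    · rw [TT, Finset.mem_filter]
      cases t with
      | nil =>
        simp at hl
        simp [hl]
      | cons y t =>
        have hS : y :: t ∈ SS B z := by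
          rw [mem_SS]
          refine ⟨(List.nodup_cons.1 hn).2, fun v hv => hB v (by simp [hv]), hc.tail, by simpa [List.getLast?_cons_cons] using hl⟩
        refine ⟨Finset.mem_insert_of_mem hS, Or.inr ⟨hS, ?_⟩⟩
        rw [List.isChain_cons_cons] at hc
        obtain ⟨s, hs⟩ := adj_exists (adj_symm hc.1)
        refine ⟨s, ?_⟩
        have : tip (y :: t) = y := rfl
        rw [stp, this, ← hs, stepV, if_neg (List.nodup_cons.1 hn).1]
    · have := extend_mem hF (x := x) (by simp) hxu ho
      convert this using 2
      have hxt := (List.nodup_cons.1 hn).1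
      have := hB x (by simp)
      ext v
      by_cases hv : v = x
      · subst hv; simp [hxt, this]
      · simp [hv]

lemma Rel_inj {B : Finset (V d)} {z x : V d} {t : List (V d)} {F G} (hF : F ∈ PF (B \ (x :: t).toFinset))
    (hG : G ∈ PF (B \ (x :: t).toFinset)) {s s' : St d} {q} (h1 : Rel B z x t F s q) (h2 : Rel B z x t G s' q) :
    F = G ∧ s = s' := by
  have hFx : F x = x := hF.2.1 x (by simp)
  have hGx : G x = x := hG.2.1 x (by simp)
  rcases h1 with ⟨L, a1, a2, a3, a4⟩ | ⟨a1, a2⟩ <;> rcases h2 with ⟨M, b1, b2, b3, b4⟩ | ⟨b1, b2⟩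
  · rw [a1] at b1
    have hLM := List.append_cancel_right b1
    subst hLM
    refine ⟨?_, ?_⟩
    · ext1 v
      by_cases hv : v ∈ L
      · exact chain_agree a3 b3 v hv
      · have := congrFun (a4.symm.trans b4) v
        simpa [restr, hv] using this
    · rw [a2] at b2
      simp at b2
      exact ee_inj b2
  · rw [a1] at b1
    have := congrArg List.length b1
    simp at this; omega
  · rw [a1] at b1
    have := congrArg List.length b1
    simp at this; omega
  · have h := a2.symm.trans b2
    have hx := congrFun h x
    simp at hx
    refine ⟨?_, ee_inj hx⟩
    ext1 v
    by_cases hv : v = x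
    · rw [hv, hFx, hGx]
    · have := congrFun h v
      simpa [hv] using this

lemma fiber {B : Finset (V d)} {z : V d} {η'' : List (V d)} (hη : η'' ∈ SS B z) :
    NN (B \ η''.toFinset) * (2 * d) ≤ ∑ η ∈ TT B z η'', NN (B \ η.toFinset) := by
  obtain ⟨x, t, rfl⟩ : ∃ x t, η'' = x :: t := by
    cases η'' with
    | nil => simp [mem_SS] at hη
    | cons x t => exact ⟨x, t, rfl⟩
  have : Fintype.card (St d) = 2 * d := by simp [St, mul_comm]
  rw [← this, NN, ← Finset.card_univ, ← Finset.card_product]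
  have hs : ∑ η ∈ TT B z (x :: t), NN (B \ η.toFinset) = ((TT B z (x :: t)).sigma fun η => PFf (B \ η.toFinset)).card := by
    rw [Finset.card_sigma]; rfl
  rw [hs]
  have hex : ∀ a : (V d → V d) × St d, ∃ q : List (V d) × (V d → V d),
      a.1 ∈ PF (B \ (x :: t).toFinset) → Rel B z x t a.1 a.2 q ∧ q.1 ∈ TT B z (x :: t) ∧ q.2 ∈ PF (B \ q.1.toFinset) := by
    intro a
    by_cases ha : a.1 ∈ PF (B \ (x :: t).toFinset)
    · obtain ⟨q, hq⟩ := Rel_ex hη ha a.2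
      exact ⟨q, fun _ => hq⟩
    · exact ⟨([], id), fun h => absurd h ha⟩
  choose Ψ hΨ using hex
  refine Finset.card_le_card_of_injOn (fun a => ⟨(Ψ a).1, (Ψ a).2⟩) ?_ ?_
  · intro a ha
    simp only [Finset.coe_product, Set.mem_prod, Finset.mem_coe, mem_PFf] at ha
    obtain ⟨-, h2, h3⟩ := hΨ a ha.1
    simp only [Finset.mem_coe, Finset.mem_sigma, mem_PFf]
    exact ⟨h2, h3⟩
  · intro a ha b hb hab
    simp only [Finset.coe_product, Set.mem_prod, Finset.mem_coe, mem_PFf] at ha hb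
    have e : Ψ a = Ψ b := by
      have h1 : (Ψ a).1 = (Ψ b).1 := congrArg Sigma.fst hab
      have h2 : (Ψ a).2 = (Ψ b).2 := by simpa using (Sigma.mk.inj_iff.1 hab).2
      exact Prod.ext h1 h2
    have h1 := (hΨ a ha.1).1
    have h2 := (hΨ b hb.1).1
    rw [← e] at h2
    obtain ⟨h3, h4⟩ := Rel_inj ha.1 hb.1 h1 h2
    exact Prod.ext h3 h4

lemma KL (hd : 5 ≤ d) : ∃ C : ℝ, 0 < C ∧ ∀ n : ℕ, 1 ≤ n → ∀ (B : Finset (V d)) (z : V d),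
    (2 * d : ℝ) * ∑ η ∈ (SS B z).filter (fun η => η.length ≤ n), (NN (B \ η.toFinset) : ℝ) ≤ C * n * NN B := by
  obtain ⟨C, hC, h⟩ := lyap (d := d) hd
  refine ⟨C, hC, fun n hn B z => ?_⟩
  obtain ⟨f, f0, fC, hf⟩ := h n hn
  have hcard : (Fintype.card (St d) : ℝ) = 2 * d := by simp [St, mul_comm]
  have hd0 : (0:ℝ) < 2 * d := by positivity
  set U : List (V d) → ℝ := fun η => (NN (B \ η.toFinset) : ℝ) with hU
  have U0 : ∀ η, 0 ≤ U η := fun η => Nat.cast_nonneg _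
  have s1 : (2 * d : ℝ) * ∑ η ∈ (SS B z).filter (fun η => η.length ≤ n), U η
      ≤ ∑ η ∈ SS B z, (U η * (2 * d) * f η - U η * ∑ s, f (stp η s)) := by
    rw [Finset.sum_filter, Finset.mul_sum]
    apply Finset.sum_le_sum
    intro η _
    have := hf η
    rw [av, hcard] at this
    have h2 : ind (η.length ≤ n) * (2 * d) + ∑ s, f (stp η s) ≤ f η * (2 * d) := by
      have := mul_le_mul_of_nonneg_right this hd0.le
      rwa [add_mul, div_mul_cancel₀ _ hd0.ne'] at this
    have h3 := mul_le_mul_of_nonneg_left h2 (U0 η)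
    have : (2 * d : ℝ) * (if η.length ≤ n then U η else 0) = U η * (ind (η.length ≤ n) * (2 * d)) := by
      unfold ind; split_ifs <;> ring
    rw [this]; linarith
  have s2 : ∑ η ∈ SS B z, U η * (2 * d) * f η ≤ ∑ η ∈ SS B z, U η * ∑ s, f (stp η s) + f [z] * NN B := by
    calc ∑ η'' ∈ SS B z, U η'' * (2 * d) * f η''
        ≤ ∑ η'' ∈ SS B z, (∑ η ∈ TT B z η'', U η) * f η'' := by
          apply Finset.sum_le_sum
          intro η hη
          apply mul_le_mul_of_nonneg_right _ (f0 η)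
          simp only [hU]; exact_mod_cast fiber hη
      _ ≤ ∑ η'' ∈ SS B z, ((if η'' = [z] then f [z] * NN B else 0) +
            ∑ η ∈ SS B z, if ∃ s, stp η s = η'' then U η * f η'' else 0) := by
          apply Finset.sum_le_sum
          intro η'' _
          have hsub : TT B z η'' ⊆ (if η'' = [z] then {[]} else ∅) ∪ (SS B z).filter fun η => ∃ s, stp η s = η'' := by
            intro η hη
            rw [TT, Finset.mem_filter] at hη
            rcases hη.2 with ⟨h1, h2⟩ | ⟨h1, h2⟩
            · simp [h1, h2]
            · exact Finset.mem_union_right _ (Finset.mem_filter.2 ⟨h1, h2⟩)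
          have h1 := Finset.sum_le_sum_of_subset_of_nonneg hsub (f := U) (fun η _ _ => U0 η)
          have h2 : ∀ S T : Finset (List (V d)), ∑ η ∈ S ∪ T, U η ≤ ∑ η ∈ S, U η + ∑ η ∈ T, U η := by
            intro S T
            rw [← Finset.sum_union_inter]
            linarith [Finset.sum_nonneg (s := S ∩ T) fun η _ => U0 η]
          have h3 := mul_le_mul_of_nonneg_right (h1.trans (h2 _ _)) (f0 η'')
          refine h3.trans (le_of_eq ?_)
          rw [add_mul]
          congr 1
          · split_ifs with h
            · subst h
              simp [hU]; ring
            · simp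
          · rw [Finset.sum_filter, Finset.sum_mul]
            apply Finset.sum_congr rfl
            intro η _
            split_ifs <;> simp
      _ ≤ _ := by
          rw [Finset.sum_add_distrib, add_comm]
          apply add_le_add
          · rw [Finset.sum_comm]
            apply Finset.sum_le_sum
            intro η _
            rw [← Finset.sum_filter, ← Finset.mul_sum]
            apply mul_le_mul_of_nonneg_left _ (U0 η)
            calc _ ≤ ∑ η'' ∈ Finset.univ.image (stp η), f η'' := by
                  apply Finset.sum_le_sum_of_subset_of_nonneg
                  · intro η'' h
                    simp at h ⊢; exact h.2
                  · exact fun _ _ _ => f0 _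
              _ ≤ _ := Finset.sum_image_le_of_nonneg (fun _ _ => f0 _)
          · rw [Finset.sum_ite_eq']
            split_ifs
            · rfl
            · exact mul_nonneg (f0 _) (Nat.cast_nonneg _)
  rw [Finset.sum_sub_distrib] at s1
  have := mul_le_mul_of_nonneg_right (fC [z]) (Nat.cast_nonneg (α := ℝ) (NN B))
  linarith

end

section

def pe (p : V d → V d) (u w : V d) : Prop := u ≠ w ∧ (p u = w ∨ p w = u)

lemma pe_symm {p : V d → V d} {u w} (h : pe p u w) : pe p w u := ⟨h.1.symm, h.2.symm⟩

lemma pe_adj {A : Finset (V d)} {p} (hp : p ∈ PF A) {u w} (h : pe p u w) : adj u w := by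
  obtain ⟨h1, h2⟩ := h
  have key : ∀ a b, a ≠ b → p a = b → adj a b := by
    intro a b hab hp'
    have : a ∈ A := by
      by_contra hA
      exact hab ((hp.2.1 a hA).symm.trans hp')
    rw [← hp']; exact hp.1 a this
  rcases h2 with h2 | h2
  · exact key _ _ h1 h2
  · exact adj_symm (key _ _ h1.symm h2)

def RR (H : Finset (V d)) (Q : Finset (V d → V d)) (a b : V d) : Prop := a ∈ H ∧ b ∈ H ∧ ∀ p ∈ Q, pe p a b

lemma RR_symm (H : Finset (V d)) (Q : Finset (V d → V d)) : Std.Symm (RR H Q) :=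
  ⟨fun _ _ h => ⟨h.2.1, h.1, fun p hp => pe_symm (h.2.2 p hp)⟩⟩

def Conn (H : Finset (V d)) (Q : Finset (V d → V d)) : Prop := ∀ u ∈ H, Relation.ReflTransGen (RR H Q) 0 u

lemma exit_ex {A H : Finset (V d)} (hHA : H ⊆ A) (h0 : (0 : V d) ∈ H) {p} (hp : p ∈ PF A) :
    ∃ x ∈ H, ∃ s, p x = x + ee s ∧ p x ∉ H := by
  have h : ∃ k, p^[k] 0 ∉ H := by
    obtain ⟨k, hk⟩ := hp.2.2 0
    exact ⟨k, fun h => hk (hHA h)⟩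
  have hk := Nat.find_spec h
  have hm : ∀ j < Nat.find h, p^[j] 0 ∈ H := fun j hj => not_not.1 (Nat.find_min h hj)
  have hk0 : Nat.find h ≠ 0 := by
    intro h0'; rw [h0'] at hk; exact hk h0
  obtain ⟨m, hm'⟩ := Nat.exists_eq_succ_of_ne_zero hk0
  have hmem := hm m (by omega)
  obtain ⟨s, hs⟩ := adj_exists (hp.1 _ (hHA hmem))
  refine ⟨_, hmem, s, hs, ?_⟩
  rw [hm', Function.iterate_succ_apply'] at hk
  exact hk

lemma exit_inj {H : Finset (V d)} {Q : Finset (V d → V d)} (hc : Conn H Q) {p q} (hp : p ∈ Q) (hq : q ∈ Q)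
    {x : V d} (hx : x ∈ H) (h1 : p x ∉ H) (h2 : p x = q x) (hr : restr p H = restr q H) : p = q := by
  have hreach : ∀ v ∈ H, Relation.ReflTransGen (RR H Q) x v := by
    intro v hv
    have := RR_symm H Q
    exact ((Relation.ReflTransGen.symmetric (r := RR H Q)).symm _ _ (hc x hx)).trans (hc v hv)
  have key : ∀ v, Relation.ReflTransGen (RR H Q) x v → ∃ k, p^[k] v = x ∧ ∀ j ≤ k, p (p^[j] v) = q (p^[j] v) := by
    intro v hv
    induction hv with
    | refl => exact ⟨0, rfl, fun j hj => by obtain rfl : j = 0 := by omega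
                                            exact h2⟩
    | @tail v w _ hvw ih =>
      obtain ⟨k, hk, hj⟩ := ih
      obtain ⟨-, hw, hall⟩ := hvw
      by_cases hvw' : p v = w
      · cases k with
        | zero =>
          exfalso
          have hk' : v = x := hk
          rw [hk'] at hvw'
          exact h1 (hvw' ▸ hw)
        | succ k =>
          refine ⟨k, ?_, ?_⟩
          · rw [← hvw', ← Function.iterate_succ_apply]; exact hk
          · intro j hjk
            rw [← hvw', ← Function.iterate_succ_apply]
            exact hj (j+1) (by omega)
      · have e1 : p w = v := by
          rcases (hall p hp).2 with h | h
          · exact absurd h hvw'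
          · exact h
        have e2 : q w = v := by
          rcases (hall q hq).2 with h | h
          · have := hj 0 (by omega)
            simp only [Function.iterate_zero, id] at this
            exact absurd (this.trans h) hvw'
          · exact h
        refine ⟨k+1, ?_, ?_⟩
        · rw [Function.iterate_succ_apply, e1, hk]
        · intro j hjk
          cases j with
          | zero => simp [e1, e2]
          | succ j => rw [Function.iterate_succ_apply, e1]; exact hj j (by omega)
  ext1 v
  by_cases hv : v ∈ H
  · obtain ⟨k, -, h⟩ := key v (hreach v hv)
    exact h 0 (by omega)
  · have := congrFun hr v
    simpa [restr, hv] using this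

lemma X0 (hd : 5 ≤ d) {A H : Finset (V d)} (hHA : H ⊆ A) (h0 : (0 : V d) ∈ H) {Q : Finset (V d → V d)} (hQ : Q ⊆ PFf A)
    (hc : Conn H Q) : (Q.card : ℝ) ≤ 2 * d * NN (A \ H) * H.card := by
  have hex : ∀ p : V d → V d, ∃ a : V d × St d, p ∈ Q → a.1 ∈ H ∧ p a.1 = a.1 + ee a.2 ∧ p a.1 ∉ H := by
    intro p
    by_cases hp : p ∈ Q
    · obtain ⟨x, h1, s, h2, h3⟩ := exit_ex hHA h0 (mem_PFf.1 (hQ hp))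
      exact ⟨(x, s), fun _ => ⟨h1, h2, h3⟩⟩
    · exact ⟨(0, (⟨0, by omega⟩, true)), fun h => absurd h hp⟩
  choose Ψ hΨ using hex
  have := Finset.card_le_card_of_injOn (s := Q) (t := (H ×ˢ (Finset.univ : Finset (St d))) ×ˢ PFf (A \ H))
    (fun p => (Ψ p, restr p H)) ?_ ?_
  · rw [Finset.card_product, Finset.card_product, Finset.card_univ] at this
    have h2 : Fintype.card (St d) = 2 * d := by simp [St, mul_comm]
    rw [h2] at this
    have h3 : (Q.card : ℝ) ≤ ((H.card * (2 * d) * NN (A \ H) : ℕ) : ℝ) := by exact_mod_cast this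
    push_cast at h3
    linarith
  · intro p hp
    simp only [Finset.coe_product, Set.mem_prod, Finset.mem_coe, Finset.mem_univ, and_true, mem_PFf]
    exact ⟨(hΨ p hp).1, restr_mem (mem_PFf.1 (hQ hp))⟩
  · intro p hp q hq hpq
    simp only [Prod.mk.injEq] at hpq
    obtain ⟨a1, a2, a3⟩ := hΨ p hp
    obtain ⟨b1, b2, b3⟩ := hΨ q hq
    refine exit_inj hc hp hq a1 a3 ?_ hpq.2
    rw [a2, hpq.1, b2]

def Bp (p : V d → V d) (n : ℕ) : Set (V d) :=
  {y | ∃ l : List (V d), l.IsChain (pe p) ∧ l.head? = some 0 ∧ l.getLast? = some y ∧ l.length ≤ n + 1}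

def Big (A : Finset (V d)) (n : ℕ) : Prop :=
  ∀ l : List (V d), l.IsChain adj → l.head? = some 0 → l.length ≤ n + 1 → ∀ v ∈ l, v ∈ A

lemma cover {A H : Finset (V d)} {n : ℕ} (hA : Big A n) (h0 : (0 : V d) ∈ H) {p} (hp : p ∈ PF A) (l : List (V d)) :
    l.IsChain (pe p) → l.head? = some 0 → l.length ≤ n + 1 → ∀ y, l.getLast? = some y →
    y ∈ H ∨ ∃ z ∈ H, ∃ s, ∃ η ∈ SS (A \ H) (z + ee s), η.length + 1 ≤ l.length ∧ η.IsChain (pe p) ∧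
      pe p z (z + ee s) ∧ η.head? = some y := by
  induction l using List.reverseRecOn with
  | nil => simp
  | append_singleton l y ih =>
    intro hc hh hl y' hy'
    simp at hy'
    subst hy'
    by_cases hyH : y ∈ H
    · exact Or.inl hyH
    have hyA : y ∈ A := hA (l ++ [y]) (hc.imp fun _ _ h => pe_adj hp h) hh hl y (by simp)
    have hyAH : y ∈ A \ H := Finset.mem_sdiff.2 ⟨hyA, hyH⟩
    right
    rcases List.eq_nil_or_concat l with rfl | ⟨l', w, rfl⟩
    · simp at hh; exact absurd (hh ▸ h0) hyH
    rw [List.concat_eq_append] at *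
    have hwy : pe p w y := by
      rw [List.isChain_append] at hc
      exact hc.2.2 w (by simp) y (by simp)
    rw [List.isChain_append] at hc
    have hh' : (l' ++ [w]).head? = some 0 := by
      rw [List.head?_append_of_ne_nil _ (by simp)] at hh
      exact hh
    simp only [List.length_append, List.length_singleton] at hl ih ⊢
    rcases ih hc.1 hh' (by omega) w (by simp) with hw | ⟨z, hz, s, η, hη, h1, h2, h3, h4⟩
    · obtain ⟨s, hs⟩ := adj_exists (pe_adj hp hwy)
      refine ⟨w, hw, s, [y], ?_, by simp, by simp, hs ▸ hwy, by simp⟩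
      rw [mem_SS]
      refine ⟨by simp, ?_, by simp, by simp [hs]⟩
      intro v hv; simp only [List.mem_singleton] at hv; subst hv; exact hyAH
    · obtain ⟨g1, g2, g3, g4⟩ := mem_SS.1 hη
      by_cases hyη : y ∈ η
      · obtain ⟨E, F, rfl⟩ := List.append_of_mem hyη
        refine ⟨z, hz, s, y :: F, ?_, ?_, ?_, h3, by simp⟩
        · rw [mem_SS]
          refine ⟨g1.of_append_right, fun v hv => g2 v (List.mem_append_right _ hv), (List.isChain_append.1 g3).2.1, ?_⟩
          rw [List.getLast?_append] at g4
          have : (y :: F).getLast? ≠ none := by simp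
          obtain ⟨b, hb⟩ := Option.ne_none_iff_exists'.1 this
          rw [hb] at g4 ⊢; simpa using g4
        · simp only [List.length_append] at h1; omega
        · exact (List.isChain_append.1 h2).2.1
      · refine ⟨z, hz, s, y :: η, ?_, by simp; omega, ?_, h3, by simp⟩
        · rw [mem_SS]
          refine ⟨List.nodup_cons.2 ⟨hyη, g1⟩, ?_, ?_, ?_⟩
          · intro v hv
            rcases List.mem_cons.1 hv with rfl | hv
            · exact hyAH
            · exact g2 v hv
          · rw [List.isChain_cons]
            refine ⟨?_, g3⟩
            intro v hv
            rw [h4] at hv; simp at hv; subst hv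
            exact adj_symm (pe_adj hp hwy)
          · rw [List.getLast?_cons, g4]; rfl
        · rw [List.isChain_cons]
          refine ⟨?_, h2⟩
          intro v hv
          rw [h4] at hv; simp at hv; subst hv
          exact pe_symm hwy

lemma Conn_ext {A H : Finset (V d)} {Q : Finset (V d → V d)} (hc : Conn H Q) {z : V d} (hz : z ∈ H) {s : St d}
    {η : List (V d)} (hη : η ∈ SS (A \ H) (z + ee s)) :
    Conn (H ∪ η.toFinset) (Q.filter fun p => η.IsChain (pe p) ∧ pe p z (z + ee s)) := by
  set H' := H ∪ η.toFinset
  set Q' := Q.filter fun p => η.IsChain (pe p) ∧ pe p z (z + ee s)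
  have hmono : ∀ u ∈ H, Relation.ReflTransGen (RR H' Q') 0 u := by
    intro u hu
    refine Relation.ReflTransGen.mono ?_ _ _ (hc u hu)
    intro a b hab
    exact ⟨Finset.mem_union_left _ hab.1, Finset.mem_union_left _ hab.2.1,
      fun p hp => hab.2.2 p (Finset.mem_filter.1 hp).1⟩
  obtain ⟨g1, g2, g3, g4⟩ := mem_SS.1 hη
  have hroot : Relation.ReflTransGen (RR H' Q') 0 (z + ee s) := by
    refine (hmono z hz).tail ⟨Finset.mem_union_left _ hz, Finset.mem_union_right _ ?_, ?_⟩
    · rw [List.mem_toFinset]; exact List.mem_of_getLast? g4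
    · intro p hp; exact (Finset.mem_filter.1 hp).2.2
  have key : ∀ M : List (V d), (∀ v ∈ M, v ∈ H') → (∀ p ∈ Q', M.IsChain (pe p)) → M.getLast? = some (z + ee s) →
      ∀ u ∈ M, Relation.ReflTransGen (RR H' Q') 0 u := by
    intro M
    induction M with
    | nil => simp
    | cons a M ih =>
      intro hM hch hlast
      cases M with
      | nil =>
        simp at hlast
        intro u hu
        simp only [List.mem_singleton] at hu
        rw [hu, hlast]; exact hroot
      | cons b M =>
        have ih' := ih (fun v hv => hM v (List.mem_cons_of_mem _ hv)) (fun p hp => (hch p hp).tail)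
          (by simpa [List.getLast?_cons_cons] using hlast)
        intro u hu
        rcases List.mem_cons.1 hu with rfl | hu
        · refine (ih' b (by simp)).tail ⟨hM b (by simp), hM u (by simp), fun p hp => ?_⟩
          exact pe_symm (List.isChain_cons_cons.1 (hch p hp)).1
        · exact ih' u hu
  intro u hu
  rcases Finset.mem_union.1 hu with hu | hu
  · exact hmono u hu
  · exact key η (fun v hv => Finset.mem_union_right _ (List.mem_toFinset.2 hv))
      (fun p hp => (Finset.mem_filter.1 hp).2.1) g4 u (List.mem_toFinset.1 hu)

noncomputable def Ix (A H : Finset (V d)) (n : ℕ) : Finset (Σ _ : V d × St d, List (V d)) :=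
  (H ×ˢ (Finset.univ : Finset (St d))).sigma fun a => (SS (A \ H) (a.1 + ee a.2)).filter fun η => η.length ≤ n

def gd (p : V d → V d) (i : Σ _ : V d × St d, List (V d)) : Prop := i.2.IsChain (pe p) ∧ pe p i.1.1 (i.1.1 + ee i.1.2)

lemma Bp_card {A H : Finset (V d)} {n : ℕ} (hA : Big A n) (h0 : (0 : V d) ∈ H) {p} (hp : p ∈ PF A) :
    (Bp p n).ncard ≤ H.card + ((Ix A H n).filter (gd p)).card := by
  have hsub : Bp p n ⊆ ((H ∪ ((Ix A H n).filter (gd p)).image fun i => tip i.2 : Finset (V d)) : Set (V d)) := by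
    rintro y ⟨l, h1, h2, h3, h4⟩
    rw [Finset.mem_coe, Finset.mem_union]
    rcases cover hA h0 hp l h1 h2 h4 y h3 with h | ⟨z, hz, s, η, hη, a1, a2, a3, a4⟩
    · exact Or.inl h
    · right
      rw [Finset.mem_image]
      refine ⟨⟨(z, s), η⟩, ?_, ?_⟩
      · rw [Finset.mem_filter, Ix, Finset.mem_sigma, Finset.mem_filter]
        exact ⟨⟨by simp [hz], hη, by simp only; omega⟩, a2, a3⟩
      · simp only [tip]
        rw [List.headD_eq_head?_getD, a4]; rfl
  refine (Set.ncard_le_ncard hsub (Finset.finite_toSet _)).trans ?_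
  rw [Set.ncard_coe_finset]
  exact (Finset.card_union_le _ _).trans (Nat.add_le_add_left Finset.card_image_le _)

lemma claim (hd : 5 ≤ d) {C : ℝ} (hC : 0 < C) (hKL : ∀ n : ℕ, 1 ≤ n → ∀ (B : Finset (V d)) (z : V d),
    (2 * d : ℝ) * ∑ η ∈ (SS B z).filter (fun η => η.length ≤ n), (NN (B \ η.toFinset) : ℝ) ≤ C * n * NN B)
    {A : Finset (V d)} {n : ℕ} (hn : 1 ≤ n) (hA : Big A n) (k : ℕ) :
    ∀ (H : Finset (V d)) (Q : Finset (V d → V d)), 0 ∈ H → H ⊆ A → Q ⊆ PFf A → Conn H Q →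
    ∑ p ∈ Q, ((Bp p n).ncard : ℝ) ^ k ≤ 2 * d * NN (A \ H) * ((1 + C) * n) ^ k * ∏ j ∈ Finset.range (k+1), ((H.card : ℝ) + j * n) := by
  induction k with
  | zero =>
    intro H Q h0 hHA hQ hc
    simpa using X0 hd hHA h0 hQ hc
  | succ k ih =>
    intro H Q h0 hHA hQ hc
    set W : ℝ := ∏ j ∈ Finset.range (k+1), ((H.card : ℝ) + (j + 1 : ℕ) * n) with hW
    set K : ℝ := 2 * d * ((1 + C) * n) ^ k * W with hK
    have hn1 : (1:ℝ) ≤ n := by exact_mod_cast hn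
    have W0 : 0 ≤ W := Finset.prod_nonneg fun j _ => by positivity
    have K0 : 0 ≤ K := by positivity
    have b1 : ∑ p ∈ Q, ((Bp p n).ncard : ℝ) ^ k ≤ K * NN (A \ H) := by
      refine (ih H Q h0 hHA hQ hc).trans ?_
      have : ∏ j ∈ Finset.range (k+1), ((H.card : ℝ) + j * n) ≤ W := by
        apply Finset.prod_le_prod
        · intro j _; positivity
        · intro j _; push_cast; nlinarith
      calc _ ≤ 2 * d * NN (A \ H) * ((1 + C) * n) ^ k * W := by gcongr
        _ = _ := by rw [hK]; ring
    have b2 : ∀ i ∈ Ix A H n, ∑ p ∈ Q.filter (fun p => gd p i), ((Bp p n).ncard : ℝ) ^ k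
        ≤ K * NN ((A \ H) \ i.2.toFinset) := by
      rintro ⟨⟨z, s⟩, η⟩ hi
      rw [Ix, Finset.mem_sigma, Finset.mem_filter] at hi
      obtain ⟨hz, hη, hlen⟩ := hi
      simp only at hη hlen
      have hz : z ∈ H := by simpa using hz
      have hsub : η.toFinset ⊆ A \ H := fun v hv => (mem_SS.1 hη).2.1 v (List.mem_toFinset.1 hv)
      have hg : Q.filter (fun p => gd p ⟨(z, s), η⟩) = Q.filter fun p => η.IsChain (pe p) ∧ pe p z (z + ee s) := by
        ext p; rw [Finset.mem_filter, Finset.mem_filter]; rfl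
      rw [hg]
      refine (ih (H ∪ η.toFinset) _ (Finset.mem_union_left _ h0) (Finset.union_subset hHA (hsub.trans Finset.sdiff_subset))
        ((Finset.filter_subset _ _).trans hQ) (Conn_ext hc hz hη)).trans ?_
      have hcard : ((H ∪ η.toFinset).card : ℝ) ≤ H.card + n := by
        have := Finset.card_union_le H η.toFinset
        have := List.toFinset_card_le η
        exact_mod_cast (by omega : (H ∪ η.toFinset).card ≤ H.card + n)
      have : ∏ j ∈ Finset.range (k+1), (((H ∪ η.toFinset).card : ℝ) + j * n) ≤ W := by
        apply Finset.prod_le_prod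
        · intro j _; positivity
        · intro j _; push_cast; nlinarith
      have hsd : A \ (H ∪ η.toFinset) = (A \ H) \ η.toFinset := by
        ext v; simp [and_assoc]
      rw [hsd]
      calc _ ≤ 2 * d * NN ((A \ H) \ η.toFinset) * ((1 + C) * n) ^ k * W := by gcongr
        _ = _ := by rw [hK]; ring
    calc ∑ p ∈ Q, ((Bp p n).ncard : ℝ) ^ (k+1)
        ≤ ∑ p ∈ Q, (H.card * ((Bp p n).ncard : ℝ) ^ k + ∑ i ∈ Ix A H n, if gd p i then ((Bp p n).ncard : ℝ) ^ k else 0) := by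
          apply Finset.sum_le_sum
          intro p hp
          have h1 : ((Bp p n).ncard : ℝ) ≤ H.card + ((Ix A H n).filter (gd p)).card := by
            exact_mod_cast Bp_card hA h0 (mem_PFf.1 (hQ hp))
          rw [← Finset.sum_filter, Finset.sum_const, nsmul_eq_mul, pow_succ]
          have : (0:ℝ) ≤ ((Bp p n).ncard : ℝ) ^ k := by positivity
          nlinarith
      _ = H.card * ∑ p ∈ Q, ((Bp p n).ncard : ℝ) ^ k +
          ∑ i ∈ Ix A H n, ∑ p ∈ Q.filter (fun p => gd p i), ((Bp p n).ncard : ℝ) ^ k := by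
          rw [Finset.sum_add_distrib, Finset.mul_sum, Finset.sum_comm]
          congr 1
          exact Finset.sum_congr rfl fun i _ => (Finset.sum_filter _ _).symm
      _ ≤ H.card * (K * NN (A \ H)) + ∑ i ∈ Ix A H n, K * NN ((A \ H) \ i.2.toFinset) := by
          apply add_le_add
          · exact mul_le_mul_of_nonneg_left b1 (Nat.cast_nonneg _)
          · exact Finset.sum_le_sum b2
      _ ≤ H.card * (K * NN (A \ H)) + K * (H.card * (C * n * NN (A \ H))) := by
          gcongr
          rw [← Finset.mul_sum]
          gcongr
          rw [Ix, Finset.sum_sigma]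
          have hd0 : (0:ℝ) < 2 * d := by positivity
          have : ∀ a ∈ H ×ˢ (Finset.univ : Finset (St d)),
            ∑ η ∈ (SS (A \ H) (a.1 + ee a.2)).filter (fun η => η.length ≤ n), (NN ((A \ H) \ η.toFinset) : ℝ) ≤
              C * n * NN (A \ H) / (2 * d) := by
            intro a _
            rw [le_div_iff₀ hd0, mul_comm]
            exact hKL n hn (A \ H) _
          refine (Finset.sum_le_sum this).trans ?_
          rw [Finset.sum_const, Finset.card_product, Finset.card_univ, nsmul_eq_mul]
          have h2 : Fintype.card (St d) = 2 * d := by simp [St, mul_comm]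
          rw [h2]; push_cast
          apply le_of_eq; field_simp
      _ ≤ _ := by
          rw [Finset.prod_range_succ']
          rw [← hW, pow_succ]
          have : (1 + C * n) ≤ (1 + C) * n := by nlinarith
          have h2 : 0 ≤ (H.card : ℝ) * K * NN (A \ H) := by positivity
          have h3 := mul_le_mul_of_nonneg_left this h2
          calc _ = (H.card : ℝ) * K * NN (A \ H) * (1 + C * n) := by ring
            _ ≤ _ := h3
            _ = _ := by rw [hK]; push_cast; ring

theorem moment (hd : 5 ≤ d) : ∃ C₁ : ℝ, 0 < C₁ ∧ ∀ (A : Finset (V d)) (n k : ℕ), 1 ≤ n → Big A n →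
    ∑ p ∈ PFf A, ((Bp p n).ncard : ℝ) ^ k ≤ NN A * (C₁ ^ k * (Nat.factorial k : ℝ) * (n : ℝ) ^ (2 * k)) := by
  obtain ⟨C, hC, hKL⟩ := KL (d := d) hd
  refine ⟨2 * (1 + C) * (1 + C), by positivity, fun A n k hn hA => ?_⟩
  rcases Nat.eq_zero_or_pos k with rfl | hk
  · simp [NN]
  have h0A : (0 : V d) ∈ A := hA [0] (by simp) (by simp) (by simp) 0 (by simp)
  have h1 := claim hd hC hKL hn hA k {0} (PFf A) (by simp) (by simpa using h0A) (Finset.Subset.refl _) (by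
    intro u hu; simp only [Finset.mem_singleton] at hu; rw [hu])
  refine h1.trans ?_
  have h2 : 2 * d * (NN (A \ {0}) : ℝ) ≤ C * NN A := by
    have := hKL 1 le_rfl A 0
    have h3 : (NN (A \ {0}) : ℝ) ≤ ∑ η ∈ (SS A 0).filter (fun η => η.length ≤ 1), (NN (A \ η.toFinset) : ℝ) := by
      have h4 : [(0 : V d)] ∈ (SS A 0).filter (fun η => η.length ≤ 1) := by
        simp [mem_SS, h0A]
      have := Finset.single_le_sum (f := fun η : List (V d) => (NN (A \ η.toFinset) : ℝ)) (fun _ _ => Nat.cast_nonneg _) h4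
      simpa using this
    have h5 : (0:ℝ) ≤ 2 * d := by positivity
    have := mul_le_mul_of_nonneg_left h3 h5
    push_cast at *
    linarith
  have hn1 : (1:ℝ) ≤ n := by exact_mod_cast hn
  have h3 : ∏ j ∈ Finset.range (k+1), (((({0} : Finset (V d)).card : ℕ) : ℝ) + j * n) ≤ (2 * n) ^ k * (Nat.factorial k : ℝ) := by
    rw [Finset.prod_range_succ', ← Finset.prod_range_add_one_eq_factorial]
    push_cast
    simp only [Finset.card_singleton, Nat.cast_one, zero_mul, add_zero, mul_one]
    have : (2 * (n:ℝ)) ^ k = ∏ j ∈ Finset.range k, (2 * (n : ℝ)) := by simp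
    rw [this, ← Finset.prod_mul_distrib]
    apply Finset.prod_le_prod
    · intro j _; positivity
    · intro j _
      have : (0:ℝ) ≤ j := Nat.cast_nonneg _
      nlinarith
  have h4 : C ≤ (1 + C) ^ k := by
    calc C ≤ 1 + C := by linarith
      _ ≤ _ := le_self_pow₀ (by linarith) (by omega)
  calc _ ≤ (C * NN A) * ((1 + C) * n) ^ k * ((2 * n) ^ k * (Nat.factorial k : ℝ)) := by
        apply mul_le_mul _ h3 (Finset.prod_nonneg fun j _ => by positivity) (by positivity)
        exact mul_le_mul_of_nonneg_right h2 (by positivity)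
    _ ≤ ((1 + C) ^ k * NN A) * ((1 + C) * n) ^ k * ((2 * n) ^ k * (Nat.factorial k : ℝ)) := by gcongr
    _ = _ := by
        rw [mul_pow, mul_pow, mul_pow, mul_pow, pow_mul, sq, mul_pow]; ring

end


def Phi (A : Finset (V d)) (p : V d → V d) : Set (Sym2 (V d)) := (fun x => s(x, p x)) '' (A : Set (V d))

lemma mem_Phi {A : Finset (V d)} {p : V d → V d} {u w : V d} :
    s(u, w) ∈ Phi A p ↔ (u ∈ A ∧ p u = w) ∨ (w ∈ A ∧ p w = u) := by
  constructor
  · rintro ⟨x, hx, h⟩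
    simp only [Sym2.eq_iff] at h
    rcases h with ⟨rfl, h⟩ | ⟨rfl, h⟩
    · exact Or.inl ⟨hx, h⟩
    · exact Or.inr ⟨hx, h⟩
  · rintro (⟨h1, h2⟩ | ⟨h1, h2⟩)
    · exact ⟨u, h1, by simp [h2]⟩
    · exact ⟨w, h1, by simp [h2, Sym2.eq_swap]⟩

lemma no_two {A : Finset (V d)} {p} (hp : p ∈ PF A) {x : V d} (h1 : x ∈ A) (h2 : p x ∈ A) : p (p x) ≠ x := by
  intro h
  obtain ⟨k, hk⟩ := hp.2.2 x
  have : ∀ k, p^[k] x = x ∨ p^[k] x = p x := by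
    intro k
    induction k with
    | zero => exact Or.inl rfl
    | succ k ih =>
      rw [Function.iterate_succ_apply']
      rcases ih with ih | ih
      · right; rw [ih]
      · left; rw [ih, h]
  rcases this k with h' | h' <;> rw [h'] at hk <;> contradiction

lemma Phi_ncard {A : Finset (V d)} {p} (hp : p ∈ PF A) : (Phi A p).ncard = (A : Set (V d)).ncard := by
  refine Set.ncard_image_of_injOn ?_
  intro x hx y hy h
  simp only [Sym2.eq_iff] at h
  rcases h with ⟨h, -⟩ | ⟨h1, h2⟩
  · exact h
  · exfalso
    have hx' : x ∈ A := hx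
    have hy' : y ∈ A := hy
    exact no_two hp hx' (h2 ▸ hy') (by rw [h2]; exact h1.symm)

lemma Phi_mem {A : Finset (V d)} {p} (hp : p ∈ PF A) : Phi A p ∈ wiredSpanningTrees (A : Set (V d)) := by
  refine ⟨?_, Phi_ncard hp, ?_⟩
  · rintro e ⟨x, hx, rfl⟩
    exact ⟨⟨x, p x, rfl, hp.1 x hx⟩, x, by simp, hx⟩
  · have key : ∀ k x, p^[k] x ∉ A → ∃ l : List (V d), l.IsChain (fun u w => adj u w ∧ s(u, w) ∈ Phi A p) ∧
        l.head? = some x ∧ ∃ y, l.getLast? = some y ∧ y ∉ (A : Set (V d)) := by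
      intro k
      induction k with
      | zero => intro x hx; exact ⟨[x], by simp, by simp, x, by simp, hx⟩
      | succ k ih =>
        intro x hx
        by_cases hxA : x ∈ A
        · obtain ⟨l, h1, h2, y, h3, h4⟩ := ih (p x) hx
          refine ⟨x :: l, ?_, by simp, y, ?_, h4⟩
          · rw [List.isChain_cons]
            refine ⟨?_, h1⟩
            intro b hb
            rw [h2] at hb; simp at hb; subst hb
            exact ⟨hp.1 x hxA, mem_Phi.2 (Or.inl ⟨hxA, rfl⟩)⟩
          · rw [List.getLast?_cons, h3]; rfl
        · exact ⟨[x], by simp, by simp, x, by simp, hxA⟩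
    intro x _
    obtain ⟨k, hk⟩ := hp.2.2 x
    exact key k x hk

lemma Phi_inj {A : Finset (V d)} {p q} (hp : p ∈ PF A) (hq : q ∈ PF A) (h : Phi A p = Phi A q) : p = q := by
  have step : ∀ x, x ∈ A → p x ≠ q x → p x ∈ A ∧ p (p x) ≠ q (p x) := by
    intro x hx hne
    have h1 : s(x, p x) ∈ Phi A q := by rw [← h]; exact mem_Phi.2 (Or.inl ⟨hx, rfl⟩)
    rcases mem_Phi.1 h1 with ⟨-, h2⟩ | ⟨h2, h3⟩
    · exact absurd h2.symm hne
    · refine ⟨h2, ?_⟩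
      rw [h3]; exact no_two hp hx h2
  ext1 x
  by_cases hx : x ∈ A
  · by_contra hne
    have : ∀ k, p^[k] x ∈ A ∧ p (p^[k] x) ≠ q (p^[k] x) := by
      intro k
      induction k with
      | zero => exact ⟨hx, hne⟩
      | succ k ih => rw [Function.iterate_succ_apply']; exact step _ ih.1 ih.2
    obtain ⟨k, hk⟩ := hp.2.2 x
    exact hk (this k).1
  · rw [hp.2.1 x hx, hq.2.1 x hx]

lemma Phi_surj {A : Finset (V d)} {T} (hT : T ∈ wiredSpanningTrees (A : Set (V d))) : ∃ p ∈ PF A, Phi A p = T := by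
  obtain ⟨h1, h2, h3⟩ := hT
  set good : V d → ℕ → Prop := fun x m => ∃ l : List (V d), l.IsChain (fun u w => adj u w ∧ s(u, w) ∈ T) ∧
        l.head? = some x ∧ (∃ y, l.getLast? = some y ∧ y ∉ (A : Set (V d))) ∧ l.length = m with hgood
  have hex : ∀ x, ∃ m, good x m := by
    intro x
    by_cases hx : x ∈ A
    · obtain ⟨l, a1, a2, a3⟩ := h3 x hx
      exact ⟨l.length, l, a1, a2, a3, rfl⟩
    · exact ⟨1, [x], by simp, by simp, ⟨x, by simp, hx⟩, rfl⟩
  set D : V d → ℕ := fun x => Nat.find (hex x) with hD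
  have hnext : ∀ x : V d, ∃ y, x ∈ A → adj x y ∧ s(x, y) ∈ T ∧ D y < D x := by
    intro x
    by_cases hx : x ∈ A
    · obtain ⟨l, a1, a2, ⟨w, a3, a4⟩, a5⟩ := Nat.find_spec (hex x)
      rcases l with _ | ⟨a, _ | ⟨b, l⟩⟩
      · simp at a2
      · simp at a2 a3; subst a2; subst a3; exact absurd hx a4
      · simp at a2; subst a2
        rw [List.isChain_cons_cons] at a1
        refine ⟨b, fun _ => ⟨a1.1.1, a1.1.2, ?_⟩⟩
        have : D b ≤ (b :: l).length := Nat.find_min' (hex b)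
          ⟨b :: l, a1.2, by simp, ⟨w, by simpa [List.getLast?_cons_cons] using a3, a4⟩, rfl⟩
        have e : D a = (a :: b :: l).length := a5.symm
        rw [e]
        simp at this ⊢; omega
    · exact ⟨x, fun h => absurd h hx⟩
  choose nx hnx using hnext
  set p : V d → V d := fun x => if x ∈ A then nx x else x with hp
  have hpin : ∀ x ∈ A, p x = nx x := fun x hx => by simp [hp, hx]
  have hpPF : p ∈ PF A := by
    refine ⟨?_, ?_, ?_⟩
    · intro x hx; rw [hpin x hx]; exact (hnx x hx).1
    · intro x hx; simp [hp, hx]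
    · have : ∀ m x, D x ≤ m → ∃ k, p^[k] x ∉ A := by
        intro m
        induction m with
        | zero =>
          intro x hx
          by_cases hxA : x ∈ A
          · have := (hnx x hxA).2.2; omega
          · exact ⟨0, hxA⟩
        | succ m ih =>
          intro x hx
          by_cases hxA : x ∈ A
          · have := (hnx x hxA).2.2
            obtain ⟨k, hk⟩ := ih (p x) (by rw [hpin x hxA]; omega)
            exact ⟨k+1, hk⟩
          · exact ⟨0, hxA⟩
      intro x; exact this _ x le_rfl
  refine ⟨p, hpPF, ?_⟩
  have hfin : T.Finite := by
    by_cases hA : A = ∅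
    · have : T = ∅ := by
        ext e
        simp only [Set.mem_empty_iff_false, iff_false]
        intro he
        obtain ⟨v, -, hv⟩ := (h1 e he).2
        rw [hA] at hv; simp at hv
      rw [this]; exact Set.finite_empty
    · apply Set.finite_of_ncard_pos
      rw [h2, Set.ncard_coe_finset]
      exact Finset.card_pos.2 (Finset.nonempty_iff_ne_empty.2 hA)
  refine Set.eq_of_subset_of_ncard_le ?_ ?_ hfin
  · rintro e ⟨x, hx, rfl⟩
    have hx' : x ∈ A := hx
    simp only [hpin x hx']
    exact (hnx x hx').2.1
  · rw [Phi_ncard hpPF, h2]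

noncomputable def WT (A : Finset (V d)) : Finset (Set (Sym2 (V d))) := (PFf A).image (Phi A)

lemma WT_eq (A : Finset (V d)) : wiredSpanningTrees (A : Set (V d)) = (WT A : Set (Set (Sym2 (V d)))) := by
  ext T
  rw [Finset.mem_coe, WT, Finset.mem_image]
  constructor
  · intro h
    obtain ⟨p, h1, h2⟩ := Phi_surj h
    exact ⟨p, mem_PFf.2 h1, h2⟩
  · rintro ⟨p, h1, rfl⟩
    exact Phi_mem (mem_PFf.1 h1)

lemma WT_injOn (A : Finset (V d)) : Set.InjOn (Phi A) (PFf A : Set (V d → V d)) := by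
  intro p hp q hq h
  exact Phi_inj (mem_PFf.1 hp) (mem_PFf.1 hq) h

lemma WT_card (A : Finset (V d)) : (WT A).card = NN A := Finset.card_image_of_injOn (WT_injOn A)

noncomputable def cfg (T : Set (Sym2 (V d))) : Config d := fun e => decide (e ∈ T)

lemma ball_eq {A : Finset (V d)} {p} (hp : p ∈ PF A) (n : ℕ) : ballU (cfg (Phi A p)) n = Bp p n := by
  have : (fun u w => adj u w ∧ cfg (Phi A p) s(u, w) = true) = pe p := by
    ext u w
    simp only [cfg, decide_eq_true_eq, mem_Phi]
    constructor
    · rintro ⟨h1, h2⟩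
      exact ⟨adj_ne h1, h2.imp (fun h => h.2) (fun h => h.2)⟩
    · intro h
      refine ⟨pe_adj hp h, ?_⟩
      have key : ∀ a b, a ≠ b → p a = b → a ∈ A := by
        intro a b hab hp'
        by_contra hA
        exact hab ((hp.2.1 a hA).symm.trans hp')
      rcases h.2 with h' | h'
      · exact Or.inl ⟨key _ _ h.1 h', h'⟩
      · exact Or.inr ⟨key _ _ h.1.symm h', h'⟩
  unfold ballU Bp
  rw [this]
  rfl

noncomputable def cubeF (r : ℕ) : Finset (V d) := Finset.Icc (fun _ => -(r : ℤ)) (fun _ => (r : ℤ))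

lemma mem_cubeF {r : ℕ} {x : V d} : x ∈ cubeF r ↔ ∀ i, |x i| ≤ (r : ℤ) := by
  simp only [cubeF, Finset.mem_Icc, Pi.le_def, abs_le]
  exact ⟨fun h i => ⟨h.1 i, h.2 i⟩, fun h => ⟨fun i => (h i).1, fun i => (h i).2⟩⟩

lemma cubeF_eq (r : ℕ) : cube (0 : V d) r = ((cubeF r : Finset (V d)) : Set (V d)) := by
  ext x
  rw [Finset.mem_coe, mem_cubeF]
  simp [cube]

lemma adj_coord {x y : V d} (h : adj x y) (i : Fin d) : |y i| ≤ |x i| + 1 := by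
  have : |x i - y i| ≤ 1 := by
    rw [← h]
    exact Finset.single_le_sum (f := fun i => |x i - y i|) (fun _ _ => abs_nonneg _) (Finset.mem_univ i)
  have := abs_sub_abs_le_abs_sub (y i) (x i)
  rw [abs_sub_comm] at this
  omega

lemma chain_bound (l : List (V d)) : ∀ x : V d, l.IsChain adj → l.head? = some x → ∀ m : ℕ, (∀ i, |x i| ≤ (m : ℤ)) →
    ∀ v ∈ l, ∀ i, |v i| + 1 ≤ (m : ℤ) + l.length := by
  induction l with
  | nil => simp
  | cons a l ih =>
    intro x hc hh m hm v hv i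
    simp at hh; subst hh
    rcases List.mem_cons.1 hv with rfl | hv
    · have := hm i; simp; omega
    · cases l with
      | nil => simp at hv
      | cons b l =>
        rw [List.isChain_cons_cons] at hc
        have := ih b hc.2 (by simp) (m+1) (fun i => by
          have := adj_coord hc.1 i
          have := hm i
          push_cast; omega) v hv i
        simp at this ⊢; omega

lemma Big_cube {r n : ℕ} (h : n ≤ r) : Big (cubeF r : Finset (V d)) n := by
  intro l h1 h2 h3 v hv
  rw [mem_cubeF]
  intro i
  have := chain_bound l 0 h1 h2 0 (by simp) v hv i
  simp at this; omega

noncomputable def KK (d n : ℕ) : Finset (Sym2 (V d)) := ((cubeF n) ×ˢ (cubeF n)).image fun a => s(a.1, a.2)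

lemma ball_sub {ω ω' : Config d} {n : ℕ} (h : ∀ e ∈ KK d n, ω e = ω' e) : ballU ω n ⊆ ballU ω' n := by
  rintro y ⟨l, h1, h2, h3, h4⟩
  refine ⟨l, ?_, h2, h3, h4⟩
  change l.IsChain _ at h1
  change l.IsChain _
  have hm := Big_cube (d := d) (le_refl n) l (h1.imp fun _ _ h => h.1) h2 h4
  rw [List.isChain_iff_getElem] at h1 ⊢
  intro i hi
  refine ⟨(h1 i hi).1, ?_⟩
  rw [← (h1 i hi).2]
  symm
  apply h
  rw [KK, Finset.mem_image]
  exact ⟨(l[i], l[i+1]), Finset.mem_product.2 ⟨hm _ (List.getElem_mem _), hm _ (List.getElem_mem _)⟩, rfl⟩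

lemma ball_congr {ω ω' : Config d} {n : ℕ} (h : ∀ e ∈ KK d n, ω e = ω' e) : ballU ω n = ballU ω' n :=
  Set.Subset.antisymm (ball_sub h) (ball_sub fun e he => (h e he).symm)

noncomputable def gg (n k : ℕ) (ω : Config d) : ℝ := ((ballU ω n).ncard : ℝ) ^ k

lemma cyl_meas (K : Finset (Sym2 (V d))) (f : Sym2 (V d) → Bool) : MeasurableSet (cylEvent K f) := by
  have : cylEvent K f = ⋂ e ∈ K, {ω : Config d | ω e = f e} := by
    ext ω; simp [cylEvent]
  rw [this]
  refine Finset.measurableSet_biInter _ fun e _ => ?_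
  exact measurableSet_eq_fun (measurable_pi_apply e) measurable_const

lemma fin_bound {n k r : ℕ} (hn : n ≤ r) {M : ℝ} (hM : 0 ≤ M)
    (h : ∑ p ∈ PFf (cubeF r : Finset (V d)), ((Bp p n).ncard : ℝ) ^ k ≤ NN (cubeF r : Finset (V d)) * M) :
    ∑ P ∈ (KK d n).powerset, gg n k (cfg (P : Set (Sym2 (V d)))) *
      ((Set.ncard { T ∈ wiredSpanningTrees (cube (0 : V d) r) |
            ∀ e ∈ KK d n, (e ∈ T ↔ cfg (P : Set (Sym2 (V d))) e = true) } : ℝ) /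
         (Set.ncard (wiredSpanningTrees (cube (0 : V d) r)) : ℝ)) ≤ M := by
  rw [cubeF_eq, WT_eq, Set.ncard_coe_finset, WT_card]
  have e1 : ∀ P ∈ (KK d n).powerset, gg n k (cfg (P : Set (Sym2 (V d)))) *
      ((Set.ncard { T ∈ ((WT (cubeF r) : Finset (Set (Sym2 (V d)))) : Set (Set (Sym2 (V d)))) |
            ∀ e ∈ KK d n, (e ∈ T ↔ cfg (P : Set (Sym2 (V d))) e = true) } : ℝ) / (NN (cubeF r : Finset (V d)) : ℝ)) =
      (∑ T ∈ WT (cubeF r), if (KK d n).filter (· ∈ T) = P then gg n k (cfg T) else 0) / NN (cubeF r : Finset (V d)) := by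
    intro P hP
    have hP := Finset.mem_powerset.1 hP
    have e2 : { T ∈ ((WT (cubeF r) : Finset (Set (Sym2 (V d)))) : Set (Set (Sym2 (V d)))) |
            ∀ e ∈ KK d n, (e ∈ T ↔ cfg (P : Set (Sym2 (V d))) e = true) } =
        (((WT (cubeF r)).filter fun T => (KK d n).filter (· ∈ T) = P : Finset (Set (Sym2 (V d)))) : Set (Set (Sym2 (V d)))) := by
      ext T
      simp only [Finset.coe_filter, cfg, decide_eq_true_eq, Finset.mem_coe, Set.mem_ofPred_eq]
      refine and_congr_right fun _ => ?_
      constructor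
      · intro h; ext e
        rw [Finset.mem_filter]
        exact ⟨fun h' => (h e h'.1).1 h'.2, fun h' => ⟨hP h', (h e (hP h')).2 h'⟩⟩
      · rintro rfl e he
        simp [he]
    rw [e2, Set.ncard_coe_finset, ← Finset.sum_filter, mul_div_assoc']
    congr 1
    rw [mul_comm, ← nsmul_eq_mul, ← Finset.sum_const]
    apply Finset.sum_congr rfl
    intro T hT
    obtain ⟨-, rfl⟩ := Finset.mem_filter.1 hT
    unfold gg
    rw [ball_congr]
    intro e he
    simp [cfg, he]
  rw [Finset.sum_congr rfl e1, ← Finset.sum_div, Finset.sum_comm]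
  apply div_le_of_le_mul₀ (Nat.cast_nonneg _) hM
  rw [mul_comm]
  refine le_trans ?_ h
  rw [WT, Finset.sum_image (WT_injOn _)]
  apply Finset.sum_le_sum
  intro p hp
  rw [Finset.sum_ite_eq]
  rw [gg, ball_eq (mem_PFf.1 hp)]
  split_ifs
  · rfl
  · positivity

lemma main_bound {n k : ℕ} {M : ℝ} (hM : 0 ≤ M) (μ : Measure (Config d)) (hμ : IsProbabilityMeasure μ) (hU : IsUSF μ)
    (h : ∀ r, n ≤ r → ∑ p ∈ PFf (cubeF r : Finset (V d)), ((Bp p n).ncard : ℝ) ^ k ≤ NN (cubeF r : Finset (V d)) * M) :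
    ∫⁻ ω, ((ballU ω n).ncard : ℝ≥0∞) ^ k ∂μ ≤ ENNReal.ofReal M := by
  have hlim : ∑ P ∈ (KK d n).powerset, gg n k (cfg (P : Set (Sym2 (V d)))) *
      (μ (cylEvent (KK d n) (cfg (P : Set (Sym2 (V d)))))).toReal ≤ M := by
    refine le_of_tendsto (tendsto_finsetSum _ fun P _ => (hU (KK d n) (cfg (P : Set (Sym2 (V d))))).const_mul _) ?_
    filter_upwards [Filter.eventually_ge_atTop n] with r hr
    exact fin_bound hr hM (h r hr)
  calc ∫⁻ ω, ((ballU ω n).ncard : ℝ≥0∞) ^ k ∂μ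
      ≤ ∫⁻ ω, ∑ P ∈ (KK d n).powerset, ENNReal.ofReal (gg n k (cfg (P : Set (Sym2 (V d))))) *
          (cylEvent (KK d n) (cfg (P : Set (Sym2 (V d))))).indicator 1 ω ∂μ := by
        apply lintegral_mono
        intro ω
        obtain ⟨P, hP⟩ : ∃ P, P = (KK d n).filter (fun e => ω e = true) := ⟨_, rfl⟩
        have hcyl : ∀ e ∈ KK d n, ω e = cfg (P : Set (Sym2 (V d))) e := by
          intro e he
          simp [cfg, hP, he]
        have hle := Finset.single_le_sum (f := fun P : Finset (Sym2 (V d)) => ENNReal.ofReal (gg n k (cfg (P : Set (Sym2 (V d))))) *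
          (cylEvent (KK d n) (cfg (P : Set (Sym2 (V d))))).indicator 1 ω) (fun _ _ => bot_le)
          (Finset.mem_powerset.2 (hP ▸ Finset.filter_subset _ _ : P ⊆ KK d n))
        refine le_trans (le_of_eq ?_) hle
        have hmem : ω ∈ cylEvent (KK d n) (cfg (P : Set (Sym2 (V d)))) := hcyl
        simp only [Set.indicator_of_mem hmem, Pi.one_apply, mul_one, gg]
        rw [ball_congr hcyl, ENNReal.ofReal_pow (Nat.cast_nonneg _), ENNReal.ofReal_natCast]
    _ = ∑ P ∈ (KK d n).powerset, ENNReal.ofReal (gg n k (cfg (P : Set (Sym2 (V d))))) *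
          μ (cylEvent (KK d n) (cfg (P : Set (Sym2 (V d))))) := by
        rw [lintegral_finsetSum]
        · apply Finset.sum_congr rfl
          intro P _
          rw [lintegral_const_mul _ (measurable_one.indicator (cyl_meas _ _)), lintegral_indicator_one (cyl_meas _ _)]
        · intro P _
          exact (measurable_one.indicator (cyl_meas _ _)).const_mul _
    _ = ENNReal.ofReal (∑ P ∈ (KK d n).powerset, gg n k (cfg (P : Set (Sym2 (V d)))) *
      (μ (cylEvent (KK d n) (cfg (P : Set (Sym2 (V d)))))).toReal) := by
        have g0 : ∀ ω : Config d, 0 ≤ gg n k ω := fun ω => by unfold gg; positivity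
        rw [ENNReal.ofReal_sum_of_nonneg fun P _ => mul_nonneg (g0 _) ENNReal.toReal_nonneg]
        apply Finset.sum_congr rfl
        intro P _
        rw [ENNReal.ofReal_mul (g0 _), ENNReal.ofReal_toReal (measure_ne_top _ _)]
    _ ≤ ENNReal.ofReal M := ENNReal.ofReal_le_ofReal hlim

/-- Theorem 4.1 (moment bounds).  Let `d ≥ 5` and let `𝒰` be the uniform spanning
forest of `ℤ^d`.  There is `C₁ = C₁(d)` such that for all `k ≥ 0` and `n ≥ 1`,
`E( |B_𝒰(0,n)|^k ) ≤ C₁^k k! n^{2k}`. -/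
theorem usf_ball_moment_bounds :
    ∀ d : ℕ, 5 ≤ d → ∃ C₁ : ℝ, 0 < C₁ ∧
      ∀ μ : Measure (Config d), IsProbabilityMeasure μ → IsUSF μ →
      ∀ k n : ℕ, 1 ≤ n →
        ∫⁻ ω, ((ballU ω n).ncard : ℝ≥0∞) ^ k ∂μ
          ≤ ENNReal.ofReal (C₁ ^ k * (Nat.factorial k : ℝ) * (n : ℝ) ^ (2 * k)) := by
  intro d hd
  obtain ⟨C₁, hC, h⟩ := moment (d := d) hd
  refine ⟨C₁, hC, fun μ hμ hU k n hn => ?_⟩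
  exact main_bound (by positivity) μ hμ hU fun r hr => h (cubeF r) n k hn (Big_cube hr)

end USFPaper
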